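/- Let n ≥ 2, and let A = (1/2, 1/2), B = (1/2, (n−1)/(2(n+1))), D = (1, 0) in the (1/p, 1/q) plane. Suppose (1/p, 1/q) lies in the open line segment from A to B or in the open line segment from A to D, and set γ = (n+1)/(2q) − (n−1)/(2p'). Then there is a constant C such that for all measurable g on 𝕊^{n-1}, ‖ x ↦ ĝdσ(x) ⟨x⟩^{−γ} ‖_{L^{q,∞}(ℝⁿ)} ≤ C ‖g‖_{L^{p,1}(𝕊^{n-1})}, where ⟨x⟩ = (1+|x|²)^{1/2}. -/

import Mathlib

open MeasureTheory Metric Real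
open scoped ENNReal NNReal RealInnerProductSpace

noncomputable section

abbrev Euc (n : ℕ) := EuclideanSpace ℝ (Fin n)

/-- Surface measure on the unit sphere `𝕊^{n-1}`. -/
def sphMeasure (n : ℕ) : Measure (Euc n) :=
  (μH[(n : ℝ) - 1]).restrict (sphere (0 : Euc n) 1)

/-- Fourier extension operator. -/
def extOp (n : ℕ) (g : Euc n → ℂ) (x : Euc n) : ℂ :=
  ∫ ξ, Complex.exp (Complex.I * (⟪x, ξ⟫ : ℝ)) * g ξ ∂(sphMeasure n)

/-- The Lorentz norm `‖F‖_{L^{p,r}(μ)} = (p ∫₀^∞ λ^r μ{|F|>λ}^{r/p} dλ/λ)^{1/r}`. -/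
def lorentzNorm {α : Type*} [MeasurableSpace α] (μ : Measure α) (p r : ℝ)
    (F : α → ℂ) : ℝ≥0∞ :=
  (ENNReal.ofReal p *
      ∫⁻ l in Set.Ioi (0 : ℝ),
        ENNReal.ofReal l ^ r * μ {x | l < ‖F x‖} ^ (r / p) / ENNReal.ofReal l) ^ (1 / r)

/-- The weak-type Lorentz norm `‖F‖_{L^{q,∞}(μ)} = sup_{λ>0} λ μ{|F|>λ}^{1/q}`. -/
def wLorentzNorm {α : Type*} [MeasurableSpace α] (μ : Measure α) (q : ℝ)
    (F : α → ℂ) : ℝ≥0∞ :=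
  ⨆ l : {l : ℝ // 0 < l}, ENNReal.ofReal l.1 * μ {x | l.1 < ‖F x‖} ^ (1 / q)

/-! ### Finiteness and invariance of the surface measure -/

lemma lipschitz_normalize {E : Type*} [NormedAddCommGroup E] [NormedSpace ℝ E] :
    LipschitzOnWith 2 (fun x : E => ‖x‖⁻¹ • x) {x | 1 ≤ ‖x‖} := by
  refine LipschitzOnWith.of_dist_le_mul ?_
  intro x hx y hy
  simp only [Set.mem_ofPred_eq] at hx hy
  rw [dist_eq_norm, dist_eq_norm]
  have hx0 : 0 < ‖x‖ := by linarith
  have hy0 : 0 < ‖y‖ := by linarith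
  have h1 : ‖x‖⁻¹ • x - ‖y‖⁻¹ • y = ‖x‖⁻¹ • (x - y) + (‖x‖⁻¹ - ‖y‖⁻¹) • y := by
    rw [smul_sub, sub_smul]; abel
  rw [h1]
  have h2 : ‖x‖⁻¹ ≤ 1 := inv_le_one_of_one_le₀ hx
  have h3 : ‖(‖x‖⁻¹ - ‖y‖⁻¹) • y‖ ≤ ‖x - y‖ := by
    rw [norm_smul, Real.norm_eq_abs]
    have : ‖x‖⁻¹ - ‖y‖⁻¹ = (‖y‖ - ‖x‖) * ‖x‖⁻¹ * ‖y‖⁻¹ := by field_simp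
    rw [this, abs_mul, abs_mul, abs_of_pos (inv_pos.2 hx0), abs_of_pos (inv_pos.2 hy0),
      mul_assoc _ ‖y‖⁻¹, inv_mul_cancel₀ hy0.ne', mul_one]
    have h4 : |‖y‖ - ‖x‖| ≤ ‖x - y‖ := by rw [norm_sub_rev]; exact abs_norm_sub_norm_le _ _
    have := abs_nonneg (‖y‖ - ‖x‖)
    calc |‖y‖ - ‖x‖| * ‖x‖⁻¹ ≤ |‖y‖ - ‖x‖| * 1 := by gcongr
      _ ≤ _ := by linarith
  have h5 : ‖‖x‖⁻¹ • (x - y)‖ ≤ ‖x - y‖ := by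
    rw [norm_smul, norm_inv, norm_norm]
    calc _ ≤ 1 * ‖x - y‖ := by gcongr
      _ = _ := one_mul _
  calc _ ≤ _ := norm_add_le _ _
    _ ≤ ‖x - y‖ + ‖x - y‖ := add_le_add h5 h3
    _ = _ := by push_cast; ring

lemma coord_le_norm {m : ℕ} (x : Euc m) (i : Fin m) : |x i| ≤ ‖x‖ := by
  simpa using PiLp.norm_apply_le x i

lemma sph_finite (n : ℕ) (hn : 2 ≤ n) : sphMeasure n Set.univ < ∞ := by
  obtain ⟨m, rfl⟩ : ∃ m, n = m + 1 := ⟨n - 1, by omega⟩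
  rw [sphMeasure, Measure.restrict_apply_univ]
  have hd : (((m + 1 : ℕ) : ℝ) - 1) = (m : ℝ) := by push_cast; ring
  rw [hd]
  let w : Fin (m + 1) → ℝ → (Fin m → ℝ) → Euc (m + 1) :=
    fun i s v => WithLp.toLp 2 (i.insertNth s v : Fin (m + 1) → ℝ)
  let Φ : Fin (m + 1) × Bool → (Fin m → ℝ) → Euc (m + 1) :=
    fun a v => ‖w a.1 (if a.2 then 1 else -1) v‖⁻¹ • w a.1 (if a.2 then 1 else -1) v
  have hwi : ∀ i s v, w i s v i = s := fun i s v => by simp [w]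
  have hcov : sphere (0 : Euc (m + 1)) 1 ⊆ ⋃ a, Φ a '' closedBall 0 1 := by
    intro ξ hξ
    have hξ1 : ‖ξ‖ = 1 := by simpa using hξ
    obtain ⟨i, hi⟩ := Finite.exists_max (fun i => |ξ i|)
    have hpos : 0 < |ξ i| := by
      rcases (abs_nonneg (ξ i)).lt_or_eq with h | h
      · exact h
      · exfalso
        have : ξ = 0 := by
          ext j
          have := hi j
          rw [← h] at this
          simpa using this
        rw [this] at hξ1; simp at hξ1
    refine Set.mem_iUnion.2 ⟨(i, decide (0 < ξ i)), fun j => |ξ i|⁻¹ * ξ (i.succAbove j), ?_, ?_⟩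
    · rw [mem_closedBall_zero_iff, pi_norm_le_iff_of_nonneg zero_le_one]
      intro j
      rw [Real.norm_eq_abs, abs_mul, abs_inv, abs_abs, inv_mul_le_one₀ hpos]
      exact hi _
    · have key : w i (if decide (0 < ξ i) then 1 else -1)
          (fun j => |ξ i|⁻¹ * ξ (i.succAbove j)) = |ξ i|⁻¹ • ξ := by
        ext k
        refine Fin.succAboveCases i ?_ (fun j => ?_) k
        · rw [hwi]
          simp only [PiLp.smul_apply, smul_eq_mul]
          by_cases h : 0 < ξ i
          · simp [h, abs_of_pos h, h.ne']
          · have h' : ξ i < 0 := lt_of_le_of_ne (not_lt.1 h) (abs_pos.1 hpos)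
            simp [h, abs_of_neg h', h'.ne]
        · simp [w]
      change ‖w i (if decide (0 < ξ i) then 1 else -1) _‖⁻¹ •
        w i (if decide (0 < ξ i) then 1 else -1) _ = ξ
      rw [key, norm_smul, hξ1, smul_smul]
      simp [hpos.ne']
  have hL : ∀ a, ∃ K : ℝ≥0, LipschitzWith K (Φ a) := by
    intro a
    have h1 : LipschitzWith 1 (fun v : Fin m → ℝ =>
        (a.1.insertNth (if a.2 then (1:ℝ) else -1) v : Fin (m + 1) → ℝ)) := by
      refine LipschitzWith.of_dist_le_mul fun v v' => ?_
      rw [NNReal.coe_one, one_mul, dist_pi_le_iff dist_nonneg]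
      intro k
      refine Fin.succAboveCases a.1 ?_ (fun j => ?_) k
      · simp
      · simpa using dist_le_pi_dist v v' j
    have h2 := (PiLp.lipschitzWith_toLp 2 (fun _ : Fin (m + 1) => ℝ)).comp h1
    have h3 := (lipschitz_normalize (E := Euc (m + 1))).comp (h2.lipschitzOnWith (s := Set.univ))
      (by
        intro v _
        have := coord_le_norm (w a.1 (if a.2 then 1 else -1) v) a.1
        rw [hwi] at this
        simp only [Set.mem_ofPred_eq]
        refine le_trans ?_ this
        split_ifs <;> simp)
    exact ⟨_, lipschitzOnWith_univ.1 h3⟩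
  refine lt_of_le_of_lt (measure_mono hcov) ?_
  refine lt_of_le_of_lt (measure_iUnion_le _) ?_
  rw [tsum_fintype]
  refine ENNReal.sum_lt_top.2 fun a _ => ?_
  obtain ⟨K, hK⟩ := hL a
  refine lt_of_le_of_lt (hK.hausdorffMeasure_image_le (Nat.cast_nonneg m) _) ?_
  have : (μH[(m : ℝ)] : Measure (Fin m → ℝ)) = volume := by
    simpa using hausdorffMeasure_pi_real (ι := Fin m)
  rw [this]
  exact ENNReal.mul_lt_top (ENNReal.rpow_lt_top_of_nonneg (Nat.cast_nonneg m) ENNReal.coe_ne_top)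
    (isCompact_closedBall _ _).measure_lt_top

lemma sph_preserving (n : ℕ) (L : Euc n ≃ₗᵢ[ℝ] Euc n) :
    MeasurePreserving L (sphMeasure n) (sphMeasure n) := by
  have h := (L.toIsometryEquiv.measurePreserving_hausdorffMeasure ((n : ℝ) - 1)).restrict_preimage
    (s := sphere (0 : Euc n) 1) isClosed_sphere.measurableSet
  have h2 : (L.toIsometryEquiv ⁻¹' sphere (0 : Euc n) 1) = sphere 0 1 := by
    ext x; simp
  rw [h2] at h
  exact h

lemma sph_ae_norm (n : ℕ) : ∀ᵐ ξ ∂(sphMeasure n), ‖ξ‖ = 1 := by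
  rw [sphMeasure]
  filter_upwards [ae_restrict_mem ((isClosed_sphere (x := (0 : Euc n)) (ε := 1)).measurableSet)] with x hx
  simpa using hx

lemma sph_integral_comp (n : ℕ) (L : Euc n ≃ₗᵢ[ℝ] Euc n) (f : Euc n → ℝ) :
    ∫ ξ, f (L ξ) ∂(sphMeasure n) = ∫ ξ, f ξ ∂(sphMeasure n) :=
  (sph_preserving n L).integral_comp L.toHomeomorph.measurableEmbedding f

lemma exists_isometry_map {n : ℕ} {v w : Euc n} (h : ‖v‖ = ‖w‖) :
    ∃ L : Euc n ≃ₗᵢ[ℝ] Euc n, L v = w :=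
  ⟨_, Submodule.reflection_sub h⟩


/-! ### Decay of the Fourier transform of the surface measure -/

lemma sph_cont_integrable {n : ℕ} [IsFiniteMeasure (sphMeasure n)] {E : Type*}
    [NormedAddCommGroup E] (f : Euc n → E)
    (hf : Continuous f) : Integrable f (sphMeasure n) := by
  obtain ⟨C, hC⟩ := (isCompact_sphere (0 : Euc n) 1).exists_bound_of_continuousOn hf.continuousOn
  refine Integrable.of_bound (C := C) hf.aestronglyMeasurable ?_
  filter_upwards [sph_ae_norm n] with ξ hξ
  exact hC ξ (by simpa using hξ)

lemma sph_rot_identity {n : ℕ} [IsFiniteMeasure (sphMeasure n)] (i j : Fin n) (hij : j ≠ i) (r : ℝ) :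
    ∫ ξ, (ξ i * Real.sin (r * ξ i) - r * (ξ j) ^ 2 * Real.cos (r * ξ i)) ∂(sphMeasure n) = 0 := by
  let Ψ : ℝ → Euc n → ℝ := fun θ ξ => (ξ i * Real.sin θ - ξ j * Real.cos θ) *
    Real.sin (r * (ξ i * Real.cos θ + ξ j * Real.sin θ))
  let Ψ' : ℝ → Euc n → ℝ := fun θ ξ => (ξ i * Real.cos θ + ξ j * Real.sin θ) *
    Real.sin (r * (ξ i * Real.cos θ + ξ j * Real.sin θ)) +
    (ξ i * Real.sin θ - ξ j * Real.cos θ) *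
    (Real.cos (r * (ξ i * Real.cos θ + ξ j * Real.sin θ)) *
      (r * (- ξ i * Real.sin θ + ξ j * Real.cos θ)))
  have hconst : ∀ θ, ∫ ξ, Ψ θ ξ ∂(sphMeasure n) =
      ∫ ξ, ξ j * Real.sin (r * ξ i) ∂(sphMeasure n) := by
    intro θ
    let u : Euc n := EuclideanSpace.single i (Real.cos (θ / 2)) +
      EuclideanSpace.single j (Real.sin (θ / 2))
    have hui : u i = Real.cos (θ / 2) := by simp [u, hij.symm]
    have huj : u j = Real.sin (θ / 2) := by simp [u, hij]
    have hinner : ∀ ξ : Euc n, ⟪u, ξ⟫ = Real.cos (θ / 2) * ξ i + Real.sin (θ / 2) * ξ j := by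
      intro ξ
      simp only [u]
      rw [inner_add_left, EuclideanSpace.inner_single_left, EuclideanSpace.inner_single_left]
      simp
    have hnorm : ‖u‖ ^ 2 = 1 := by
      rw [← real_inner_self_eq_norm_sq, hinner, hui, huj]
      nlinarith [Real.sin_sq_add_cos_sq (θ / 2)]
    have hc : Real.cos θ = 2 * Real.cos (θ / 2) ^ 2 - 1 := by
      rw [← Real.cos_two_mul]; ring_nf
    have hc' : Real.cos θ = 1 - 2 * Real.sin (θ / 2) ^ 2 := by
      rw [hc]; nlinarith [Real.sin_sq_add_cos_sq (θ / 2)]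
    have hs : Real.sin θ = 2 * Real.sin (θ / 2) * Real.cos (θ / 2) := by
      rw [← Real.sin_two_mul]; ring_nf
    rw [← sph_integral_comp n (Submodule.reflection (ℝ ∙ u)) (fun ξ => ξ j * Real.sin (r * ξ i))]
    refine integral_congr_ae (Filter.Eventually.of_forall fun ξ => ?_)
    have e1 : (Submodule.reflection (ℝ ∙ u) ξ) i = ξ i * Real.cos θ + ξ j * Real.sin θ := by
      rw [Submodule.reflection_singleton_apply, hinner]
      simp only [RCLike.ofReal_real_eq_id, id, hnorm, PiLp.sub_apply, PiLp.smul_apply, smul_eq_mul,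
        hui, nsmul_eq_mul]
      rw [hc, hs]; push_cast; ring
    have e2 : (Submodule.reflection (ℝ ∙ u) ξ) j = ξ i * Real.sin θ - ξ j * Real.cos θ := by
      rw [Submodule.reflection_singleton_apply, hinner]
      simp only [RCLike.ofReal_real_eq_id, id, hnorm, PiLp.sub_apply, PiLp.smul_apply, smul_eq_mul,
        huj, nsmul_eq_mul]
      rw [hc', hs]; push_cast; ring
    simp only [e1, e2, Ψ]
  have hder := (hasDerivAt_integral_of_dominated_loc_of_deriv_le (μ := sphMeasure n) (F := Ψ)
    (F' := Ψ') (x₀ := (0:ℝ)) (s := Set.univ) (bound := fun _ => 2 + 2 * (|r| * 2)) Filter.univ_mem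
    (Filter.Eventually.of_forall fun θ => by
      refine Continuous.aestronglyMeasurable ?_
      simp only [Ψ]; fun_prop)
    (by
      refine sph_cont_integrable _ ?_
      simp only [Ψ]; fun_prop)
    (by
      refine Continuous.aestronglyMeasurable ?_
      simp only [Ψ']; fun_prop)
    (by
      filter_upwards [sph_ae_norm n] with ξ hξ θ _
      have hi := coord_le_norm ξ i
      have hj := coord_le_norm ξ j
      rw [hξ] at hi hj
      have b1 : ∀ a b : ℝ, |a| ≤ 1 → |b| ≤ 1 → |ξ i * a| ≤ 1 ∧ |ξ j * b| ≤ 1 := by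
        intro a b ha hb
        rw [abs_mul, abs_mul]
        exact ⟨mul_le_one₀ hi (abs_nonneg _) ha, mul_le_one₀ hj (abs_nonneg _) hb⟩
      have hs := Real.abs_sin_le_one θ
      have hc := Real.abs_cos_le_one θ
      have k1 := b1 _ _ hc hs
      have k2 := b1 _ _ hs hc
      have m1 : |ξ i * Real.cos θ + ξ j * Real.sin θ| ≤ 2 :=
        (abs_add_le _ _).trans (by linarith [k1.1, k1.2])
      have m2 : |ξ i * Real.sin θ - ξ j * Real.cos θ| ≤ 2 :=
        (abs_sub _ _).trans (by linarith [k2.1, k2.2])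
      have m3 : |- ξ i * Real.sin θ + ξ j * Real.cos θ| ≤ 2 := by
        rw [← abs_neg]; convert m2 using 2; ring
      rw [Real.norm_eq_abs]
      refine (abs_add_le _ _).trans ?_
      simp only [abs_mul]
      have s1 := Real.abs_sin_le_one (r * (ξ i * Real.cos θ + ξ j * Real.sin θ))
      have s2 := Real.abs_cos_le_one (r * (ξ i * Real.cos θ + ξ j * Real.sin θ))
      have hr := abs_nonneg r
      calc _ ≤ 2 * 1 + 2 * (1 * (|r| * 2)) := by gcongr
        _ = _ := by ring)
    (integrable_const _)
    (Filter.Eventually.of_forall fun ξ θ _ => by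
      simp only [Ψ, Ψ']
      have hA : HasDerivAt (fun θ : ℝ => ξ i * Real.sin θ - ξ j * Real.cos θ)
          (ξ i * Real.cos θ + ξ j * Real.sin θ) θ := by
        have := ((Real.hasDerivAt_sin θ).const_mul (ξ i)).sub
          ((Real.hasDerivAt_cos θ).const_mul (ξ j))
        convert! this using 1; ring
      have hB : HasDerivAt (fun θ : ℝ => r * (ξ i * Real.cos θ + ξ j * Real.sin θ))
          (r * (- ξ i * Real.sin θ + ξ j * Real.cos θ)) θ := by
        have := (((Real.hasDerivAt_cos θ).const_mul (ξ i)).add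
          ((Real.hasDerivAt_sin θ).const_mul (ξ j))).const_mul r
        convert! this using 1; ring
      exact hA.mul hB.sin)).2
  have h0 : HasDerivAt (fun θ => ∫ ξ, Ψ θ ξ ∂(sphMeasure n)) 0 0 := by
    simp_rw [hconst]; exact hasDerivAt_const _ _
  rw [← hder.unique h0]
  refine integral_congr_ae (Filter.Eventually.of_forall fun ξ => ?_)
  simp [Ψ']; ring

lemma sph_deriv1 {n : ℕ} [IsFiniteMeasure (sphMeasure n)] (i : Fin n) (r : ℝ) :
    HasDerivAt (fun r => ∫ ξ, Real.cos (r * ξ i) ∂(sphMeasure n))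
      (∫ ξ, - Real.sin (r * ξ i) * ξ i ∂(sphMeasure n)) r := by
  refine (hasDerivAt_integral_of_dominated_loc_of_deriv_le (μ := sphMeasure n)
    (F := fun r ξ => Real.cos (r * ξ i))
    (F' := fun r ξ => - Real.sin (r * ξ i) * ξ i) (x₀ := r) (s := Set.univ) (bound := fun _ => 1)
    Filter.univ_mem (Filter.Eventually.of_forall fun θ =>
      Continuous.aestronglyMeasurable (by fun_prop))
    (sph_cont_integrable _ (by fun_prop)) (Continuous.aestronglyMeasurable (by fun_prop)) ?_
    (integrable_const _) ?_).2
  · filter_upwards [sph_ae_norm n] with ξ hξ θ _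
    have hi := coord_le_norm ξ i
    rw [hξ] at hi
    rw [Real.norm_eq_abs, abs_mul, abs_neg]
    exact mul_le_one₀ (Real.abs_sin_le_one _) (abs_nonneg _) hi
  · refine Filter.Eventually.of_forall fun ξ θ _ => ?_
    have : HasDerivAt (fun θ : ℝ => θ * ξ i) (ξ i) θ := by
      simpa using (hasDerivAt_id θ).mul_const (ξ i)
    exact this.cos

lemma sph_deriv2 {n : ℕ} [IsFiniteMeasure (sphMeasure n)] (i : Fin n) (r : ℝ) :
    HasDerivAt (fun r => ∫ ξ, - Real.sin (r * ξ i) * ξ i ∂(sphMeasure n))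
      (∫ ξ, - (Real.cos (r * ξ i) * ξ i) * ξ i ∂(sphMeasure n)) r := by
  refine (hasDerivAt_integral_of_dominated_loc_of_deriv_le (μ := sphMeasure n)
    (F := fun r ξ => - Real.sin (r * ξ i) * ξ i)
    (F' := fun r ξ => - (Real.cos (r * ξ i) * ξ i) * ξ i) (x₀ := r) (s := Set.univ)
    (bound := fun _ => 1)
    Filter.univ_mem (Filter.Eventually.of_forall fun θ =>
      Continuous.aestronglyMeasurable (by fun_prop))
    (sph_cont_integrable _ (by fun_prop)) (Continuous.aestronglyMeasurable (by fun_prop)) ?_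
    (integrable_const _) ?_).2
  · filter_upwards [sph_ae_norm n] with ξ hξ θ _
    have hi := coord_le_norm ξ i
    rw [hξ] at hi
    rw [Real.norm_eq_abs, abs_mul, abs_neg, abs_mul]
    exact mul_le_one₀ (mul_le_one₀ (Real.abs_cos_le_one _) (abs_nonneg _) hi) (abs_nonneg _) hi
  · refine Filter.Eventually.of_forall fun ξ θ _ => ?_
    have : HasDerivAt (fun θ : ℝ => θ * ξ i) (ξ i) θ := by
      simpa using (hasDerivAt_id θ).mul_const (ξ i)
    exact this.sin.neg.mul_const _

lemma sph_ode {n : ℕ} [IsFiniteMeasure (sphMeasure n)] (i : Fin n) (r : ℝ) :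
    r * ((∫ ξ, Real.cos (r * ξ i) ∂(sphMeasure n)) +
      ∫ ξ, - (Real.cos (r * ξ i) * ξ i) * ξ i ∂(sphMeasure n)) +
      ((n : ℝ) - 1) * ∫ ξ, - Real.sin (r * ξ i) * ξ i ∂(sphMeasure n) = 0 := by
  have h1 : ∑ j ∈ Finset.univ.erase i,
      ∫ ξ, (ξ i * Real.sin (r * ξ i) - r * (ξ j) ^ 2 * Real.cos (r * ξ i)) ∂(sphMeasure n) = 0 :=
    Finset.sum_eq_zero fun j hj => sph_rot_identity i j (Finset.ne_of_mem_erase hj) r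
  rw [← integral_finsetSum _ (fun j _ => sph_cont_integrable _ (by fun_prop))] at h1
  have h2 : ∫ ξ, ∑ j ∈ Finset.univ.erase i,
      (ξ i * Real.sin (r * ξ i) - r * (ξ j) ^ 2 * Real.cos (r * ξ i)) ∂(sphMeasure n)
      = ∫ ξ, (-(r * (Real.cos (r * ξ i) + - (Real.cos (r * ξ i) * ξ i) * ξ i) +
        ((n : ℝ) - 1) * (- Real.sin (r * ξ i) * ξ i))) ∂(sphMeasure n) := by
    refine integral_congr_ae ?_
    filter_upwards [sph_ae_norm n] with ξ hξ
    have hs : ∑ j ∈ Finset.univ.erase i, (ξ j) ^ 2 = 1 - (ξ i) ^ 2 := by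
      have h3 : ∑ j, (ξ j) ^ 2 = 1 := by
        rw [← EuclideanSpace.real_norm_sq_eq, hξ, one_pow]
      rw [← Finset.add_sum_erase _ _ (Finset.mem_univ i)] at h3
      linarith
    have hcard : (((Finset.univ.erase i).card : ℕ) : ℝ) = (n : ℝ) - 1 := by
      rw [Finset.card_erase_of_mem (Finset.mem_univ i), Finset.card_univ, Fintype.card_fin,
        Nat.cast_sub (Nat.one_le_of_lt i.2), Nat.cast_one]
    rw [Finset.sum_sub_distrib, Finset.sum_const, nsmul_eq_mul, hcard, ← Finset.sum_mul,
      ← Finset.mul_sum, hs]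
    ring
  rw [h2, integral_neg, integral_add (sph_cont_integrable _ (by fun_prop))
    (sph_cont_integrable _ (by fun_prop)), integral_const_mul, integral_const_mul,
    integral_add (sph_cont_integrable _ (by fun_prop)) (sph_cont_integrable _ (by fun_prop))] at h1
  linarith

/-- ODE energy estimate. -/
lemma ode_decay (m : ℕ) (f f1 f2 : ℝ → ℝ)
    (hf : ∀ r, HasDerivAt f (f1 r) r) (hf1 : ∀ r, HasDerivAt f1 (f2 r) r)
    (hode : ∀ r, r * (f r + f2 r) + (m : ℝ) * f1 r = 0) :
    ∃ C, 0 ≤ C ∧ ∀ r, (m : ℝ) + 1 ≤ r → r ^ m * f r ^ 2 ≤ C := by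
  let E : ℝ → ℝ := fun r => r ^ m * (f r ^ 2 + f1 r ^ 2 + m / r * (f r * f1 r))
  let G : ℝ → ℝ := fun r => E r * Real.exp (((m : ℝ) + 1) / r)
  have hm : (0 : ℝ) ≤ m := Nat.cast_nonneg m
  have hE : ∀ r, (m : ℝ) + 1 ≤ r → HasDerivAt E (- (m : ℝ) * r ^ m / r ^ 2 * (f r * f1 r)) r := by
    intro r hr
    have hr0 : 0 < r := by linarith
    have d1 : HasDerivAt (fun r : ℝ => r ^ m) (m * r ^ m / r) r := by
      have := hasDerivAt_pow m r
      convert! this using 1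
      rcases m with _ | k
      · simp
      · simp only [Nat.add_sub_cancel]; field_simp; ring
    have d2 : HasDerivAt (fun r : ℝ => (m : ℝ) / r) (- m / r ^ 2) r := by
      have := (hasDerivAt_inv hr0.ne').const_mul (m : ℝ)
      convert! this using 1
      field_simp
    have h := d1.mul ((((hf r).pow 2).add ((hf1 r).pow 2)).add (d2.mul ((hf r).mul (hf1 r))))
    convert! h using 1
    have h2 : f2 r = - f r - m * f1 r / r := by
      have := hode r
      field_simp
      linarith
    simp only [Pi.pow_apply, Pi.add_apply, Pi.mul_apply]
    rw [h2]
    field_simp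
    push_cast
    ring
  have hEl : ∀ r, (m : ℝ) + 1 ≤ r → r ^ m * (f r ^ 2 + f1 r ^ 2) ≤ 2 * E r := by
    intro r hr
    have hr0 : 0 < r := by linarith
    have hq : 0 ≤ (m : ℝ) / r := by positivity
    have hq1 : (m : ℝ) / r ≤ 1 := by rw [div_le_one hr0]; linarith
    have : f r ^ 2 + f1 r ^ 2 ≤ 2 * (f r ^ 2 + f1 r ^ 2 + m / r * (f r * f1 r)) := by
      nlinarith [sq_nonneg (f r + f1 r), sq_nonneg (f r), sq_nonneg (f1 r),
        mul_nonneg hq (sq_nonneg (f r + f1 r)),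
        mul_nonneg (sub_nonneg.2 hq1) (add_nonneg (sq_nonneg (f r)) (sq_nonneg (f1 r)))]
    have hp : 0 < r ^ m := by positivity
    simp only [E]
    nlinarith
  have hG : ∀ r, (m : ℝ) + 1 ≤ r → HasDerivAt G ((- (m : ℝ) * r ^ m / r ^ 2 * (f r * f1 r)
      - ((m : ℝ) + 1) / r ^ 2 * E r) * Real.exp (((m : ℝ) + 1) / r)) r := by
    intro r hr
    have hr0 : 0 < r := by linarith
    have d2 : HasDerivAt (fun r : ℝ => ((m : ℝ) + 1) / r) (- ((m : ℝ) + 1) / r ^ 2) r := by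
      have := (hasDerivAt_inv hr0.ne').const_mul ((m : ℝ) + 1)
      convert! this using 1
      field_simp
    have := (hE r hr).mul d2.exp
    convert! this using 1
    ring
  have hanti : AntitoneOn G (Set.Ici ((m : ℝ) + 1)) := by
    refine antitoneOn_of_deriv_nonpos (convex_Ici _)
      (fun r hr => (hG r hr).continuousAt.continuousWithinAt)
      (fun r hr => (hG r (interior_subset hr)).differentiableAt.differentiableWithinAt) ?_
    intro r hr
    have hr' : (m : ℝ) + 1 ≤ r := interior_subset hr
    have hr0 : 0 < r := by linarith
    rw [(hG r hr').deriv]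
    refine mul_nonpos_of_nonpos_of_nonneg ?_ (Real.exp_pos _).le
    have h1 := hEl r hr'
    have hp : 0 < r ^ m := by positivity
    have hi : 0 < (r ^ 2)⁻¹ := by positivity
    have e : - (m : ℝ) * r ^ m / r ^ 2 * (f r * f1 r) - ((m : ℝ) + 1) / r ^ 2 * E r
      = (r ^ 2)⁻¹ * (- (m : ℝ) * (r ^ m * (f r * f1 r)) - ((m : ℝ) + 1) * E r) := by
      field_simp
    rw [e]
    refine mul_nonpos_of_nonneg_of_nonpos hi.le ?_
    have h3 : - 2 * (r ^ m * (f r * f1 r)) ≤ r ^ m * (f r ^ 2 + f1 r ^ 2) := by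
      nlinarith [mul_nonneg hp.le (sq_nonneg (f r + f1 r))]
    have h4 : 0 ≤ r ^ m * (f r ^ 2 + f1 r ^ 2) := by positivity
    nlinarith
  have hE0 : ∀ r, (m : ℝ) + 1 ≤ r → 0 ≤ E r := fun r hr => by
    have hr0 : 0 < r := by linarith
    have := hEl r hr
    have h4 : 0 ≤ r ^ m * (f r ^ 2 + f1 r ^ 2) := by positivity
    linarith
  refine ⟨2 * G (m + 1), ?_, fun r hr => ?_⟩
  · have := hE0 (m + 1) le_rfl
    simp only [G]; positivity
  · have hr0 : 0 < r := by linarith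
    have h1 := hanti (Set.mem_Ici.2 le_rfl) (Set.mem_Ici.2 hr) hr
    have h2 : E r ≤ G r := by
      simp only [G]
      refine le_mul_of_one_le_right (hE0 r hr) (Real.one_le_exp ?_)
      positivity
    have h3 := hEl r hr
    have h4 : 0 ≤ r ^ m * f1 r ^ 2 := by positivity
    nlinarith

/-- The cosine transform of surface measure. -/
def sphCos (n : ℕ) (x : Euc n) : ℝ := ∫ ξ, Real.cos ⟪x, ξ⟫ ∂(sphMeasure n)

lemma sphCos_abs_le {n : ℕ} [IsFiniteMeasure (sphMeasure n)] (x : Euc n) :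
    |sphCos n x| ≤ (sphMeasure n).real Set.univ := by
  have := norm_integral_le_of_norm_le_const (μ := sphMeasure n) (f := fun ξ => Real.cos ⟪x, ξ⟫)
    (C := 1) (Filter.Eventually.of_forall fun ξ => by
      simpa using Real.abs_cos_le_one _)
  simpa [sphCos] using this

lemma sphCos_decay {n : ℕ} (hn : 2 ≤ n) [IsFiniteMeasure (sphMeasure n)] :
    ∃ C, 0 ≤ C ∧ ∀ x : Euc n, ‖x‖ ^ (n - 1) * sphCos n x ^ 2 ≤ C := by
  obtain ⟨m, rfl⟩ : ∃ m, n = m + 1 := ⟨n - 1, by omega⟩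
  obtain ⟨C, hC0, hC⟩ := ode_decay m _ _ _ (sph_deriv1 (0 : Fin (m + 1))) (sph_deriv2 0)
    (fun r => by have := sph_ode (0 : Fin (m + 1)) r; push_cast at this; simpa using this)
  set A := (sphMeasure (m + 1)).real Set.univ
  refine ⟨C + ((m : ℝ) + 1) ^ m * A ^ 2, by positivity, fun x => ?_⟩
  simp only [Nat.add_sub_cancel]
  have hrad : sphCos (m + 1) x = ∫ ξ, Real.cos (‖x‖ * ξ 0) ∂(sphMeasure (m + 1)) := by
    obtain ⟨L, hL⟩ := exists_isometry_map (v := EuclideanSpace.single (0 : Fin (m+1)) ‖x‖) (w := x)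
      (by simp)
    rw [sphCos, ← sph_integral_comp _ L]
    refine integral_congr_ae (Filter.Eventually.of_forall fun ξ => ?_)
    simp only
    nth_rewrite 1 [← hL]
    rw [LinearIsometryEquiv.inner_map_map, EuclideanSpace.inner_single_left]
    simp
  by_cases hx : (m : ℝ) + 1 ≤ ‖x‖
  · rw [hrad]
    have := hC _ hx
    have h2 : 0 ≤ ((m : ℝ) + 1) ^ m * A ^ 2 := by positivity
    linarith
  · have h1 : sphCos (m + 1) x ^ 2 ≤ A ^ 2 := by
      rw [← sq_abs]
      exact pow_le_pow_left₀ (abs_nonneg _) (sphCos_abs_le x) 2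
    have : ‖x‖ ^ m * sphCos (m + 1) x ^ 2 ≤ ((m : ℝ) + 1) ^ m * A ^ 2 := by
      gcongr
      exact (not_le.1 hx).le
    linarith

lemma sph_char {n : ℕ} [IsFiniteMeasure (sphMeasure n)] (x : Euc n) :
    ∫ ξ, Complex.exp (Complex.I * (⟪x, ξ⟫ : ℝ)) ∂(sphMeasure n) = (sphCos n x : ℂ) := by
  have hs : ∫ ξ, Real.sin ⟪x, ξ⟫ ∂(sphMeasure n) = 0 := by
    have := sph_integral_comp n (LinearIsometryEquiv.neg ℝ) (fun ξ => Real.sin ⟪x, ξ⟫)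
    simp only [LinearIsometryEquiv.coe_neg, inner_neg_right, Real.sin_neg, integral_neg] at this
    linarith
  have h : ∀ ξ : Euc n, Complex.exp (Complex.I * (⟪x, ξ⟫ : ℝ)) =
      ((Real.cos ⟪x, ξ⟫ : ℝ) : ℂ) + ((Real.sin ⟪x, ξ⟫ : ℝ) : ℂ) * Complex.I := by
    intro ξ
    rw [mul_comm, Complex.exp_mul_I, Complex.ofReal_cos, Complex.ofReal_sin]
  simp_rw [h]
  rw [integral_add, integral_mul_const, integral_complex_ofReal, integral_complex_ofReal, hs]
  · simp [sphCos]
  · exact sph_cont_integrable _ (by fun_prop)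
  · exact sph_cont_integrable _ (by fun_prop)


/-! ### Generic Fourier-type operators -/

lemma phase_norm (t : ℝ) : ‖Complex.exp (Complex.I * (t : ℂ))‖ = 1 := by
  rw [mul_comm]; exact Complex.norm_exp_ofReal_mul_I t

lemma phase_swap {α β : Type*} [MeasurableSpace α] [MeasurableSpace β] (μ : Measure β)
    (ν : Measure α) [SFinite μ] [SFinite ν] (φ : α → β → ℝ)
    (hφ : Measurable (Function.uncurry φ)) {G : β → ℂ} {K : α → ℂ}
    (hG : Integrable G μ) (hK : Integrable K ν) :
    ∫ x, (∫ z, Complex.exp (Complex.I * (φ x z : ℝ)) * G z ∂μ) * K x ∂ν =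
      ∫ z, G z * (∫ x, Complex.exp (Complex.I * (φ x z : ℝ)) * K x ∂ν) ∂μ := by
  simp_rw [← integral_mul_const, ← integral_const_mul]
  rw [integral_integral_swap]
  · refine integral_congr_ae (Filter.Eventually.of_forall fun z => ?_)
    refine integral_congr_ae (Filter.Eventually.of_forall fun x => ?_)
    simp only
    ring
  · have h := hK.mul_prod hG
    have h2 := h.bdd_mul (c := 1) (f := fun p : α × β => Complex.exp (Complex.I * (φ p.1 p.2 : ℝ)))
      (by
        have : Measurable (fun p : α × β => φ p.1 p.2) := hφ
        exact Measurable.aestronglyMeasurable (by fun_prop))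
      (Filter.Eventually.of_forall fun p => (phase_norm _).le)
    refine h2.congr (Filter.Eventually.of_forall fun p => ?_)
    simp only [Function.uncurry]
    ring

/-- The Fourier-type transform of a density with respect to a measure. -/
def ftr {n : ℕ} (μ : Measure (Euc n)) (G : Euc n → ℂ) (x : Euc n) : ℂ :=
  ∫ ξ, Complex.exp (Complex.I * (⟪x, ξ⟫ : ℝ)) * G ξ ∂μ

lemma extOp_eq (n : ℕ) (g : Euc n → ℂ) : extOp n g = ftr (sphMeasure n) g := rfl

lemma ftr_norm_le {n : ℕ} (μ : Measure (Euc n)) (G : Euc n → ℂ) (x : Euc n) :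
    ‖ftr μ G x‖ ≤ ∫ ξ, ‖G ξ‖ ∂μ := by
  refine (norm_integral_le_integral_norm _).trans (le_of_eq ?_)
  simp_rw [norm_mul, phase_norm, one_mul]

lemma ftr_continuous {n : ℕ} (μ : Measure (Euc n)) {G : Euc n → ℂ} (hG : Integrable G μ) :
    Continuous (ftr μ G) := by
  refine continuous_of_dominated (bound := fun ξ => ‖G ξ‖) ?_ ?_ hG.norm ?_
  · intro x
    exact (Continuous.aestronglyMeasurable (by fun_prop)).mul hG.aestronglyMeasurable
  · intro x
    exact Filter.Eventually.of_forall fun ξ => by rw [norm_mul, phase_norm, one_mul]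
  · exact Filter.Eventually.of_forall fun ξ => by fun_prop

lemma ftr_pairing {n : ℕ} (μ ν : Measure (Euc n)) [SFinite μ] [SFinite ν] {G K : Euc n → ℂ}
    (hG : Integrable G μ) (hK : Integrable K ν) :
    ∫ x, ftr μ G x * K x ∂ν = ∫ ξ, G ξ * ftr ν K ξ ∂μ := by
  have := phase_swap μ ν (fun x ξ : Euc n => (⟪x, ξ⟫ : ℝ))
    (Continuous.measurable (by fun_prop)) hG hK
  simp only [ftr]
  rw [this]
  simp_rw [real_inner_comm]

lemma ftr_square {n : ℕ} (μ ν : Measure (Euc n)) [SFinite μ] [SFinite ν] {G K : Euc n → ℂ}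
    (hG : Integrable G μ) (hK : Integrable K ν) :
    ∫ x, ((‖ftr μ G x‖ ^ 2 : ℝ) : ℂ) * K x ∂ν =
      ∫ z, (G z.1 * (starRingEnd ℂ) (G z.2)) * ftr ν K (z.1 - z.2) ∂(μ.prod μ) := by
  have hGc : Integrable (fun ξ => (starRingEnd ℂ) (G ξ)) μ := by
    have := hG.norm
    refine (integrable_norm_iff ?_).1 ?_
    · exact Complex.continuous_conj.comp_aestronglyMeasurable hG.aestronglyMeasurable
    · simpa using hG.norm
  have := phase_swap (μ.prod μ) ν (fun (x : Euc n) (z : Euc n × Euc n) => (⟪x, z.1 - z.2⟫ : ℝ))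
    (Continuous.measurable (by fun_prop)) (hG.mul_prod hGc) hK
  simp only [ftr]
  simp_rw [fun (z : Euc n × Euc n) (x : Euc n) => real_inner_comm x (z.1 - z.2)]
  rw [← this]
  refine integral_congr_ae (Filter.Eventually.of_forall fun x => ?_)
  simp only
  congr 1
  have h2 : ((‖∫ ξ, Complex.exp (Complex.I * (⟪x, ξ⟫ : ℝ)) * G ξ ∂μ‖ ^ 2 : ℝ) : ℂ) =
      (∫ ξ, Complex.exp (Complex.I * (⟪x, ξ⟫ : ℝ)) * G ξ ∂μ) *
      ∫ ξ, (starRingEnd ℂ) (Complex.exp (Complex.I * (⟪x, ξ⟫ : ℝ)) * G ξ) ∂μ := by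
    rw [integral_conj, Complex.mul_conj, Complex.normSq_eq_norm_sq]
  rw [h2, ← integral_prod_mul]
  refine integral_congr_ae (Filter.Eventually.of_forall fun z => ?_)
  simp only [map_mul, ← Complex.exp_conj, Complex.conj_I, Complex.conj_ofReal, inner_sub_right,
    Complex.ofReal_sub]
  rw [mul_sub, sub_eq_add_neg, Complex.exp_add, ← neg_mul]
  ring

/-! ### Gaussians -/

lemma gauss_ftr {n : ℕ} {b : ℝ} (hb : 0 < b) (v : Euc n) :
    ftr volume (fun x : Euc n => ((Real.exp (-b * ‖x‖ ^ 2) : ℝ) : ℂ)) v =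
      (((π / b) ^ ((n : ℝ) / 2) * Real.exp (-(1 / (4 * b)) * ‖v‖ ^ 2) : ℝ) : ℂ) := by
  have := GaussianFourier.integral_cexp_neg_mul_sq_norm_add (V := Euc n) (b := (b : ℂ))
    (by simpa using hb) Complex.I v
  rw [finrank_euclideanSpace_fin] at this
  simp only [ftr]
  rw [Complex.ofReal_mul, Complex.ofReal_exp, Complex.ofReal_cpow (by positivity)]
  convert this using 1
  · refine integral_congr_ae (Filter.Eventually.of_forall fun x => ?_)
    simp only
    rw [Complex.ofReal_exp, ← Complex.exp_add]
    congr 1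
    push_cast
    ring
  · push_cast
    rw [Complex.I_sq]
    congr 2
    field_simp

lemma gauss_integrable {n : ℕ} {b : ℝ} (hb : 0 < b) (z : Euc n) :
    Integrable (fun x : Euc n => Real.exp (-b * ‖x - z‖ ^ 2)) := by
  have := GaussianFourier.integrable_cexp_neg_mul_sq_norm_add (V := Euc n) (b := (b : ℂ))
    (by simpa using hb) 0 0
  have h2 : Integrable (fun x : Euc n => Real.exp (-b * ‖x‖ ^ 2)) := by
    refine (this.norm).congr (Filter.Eventually.of_forall fun x => ?_)
    simp only [zero_mul, add_zero, Complex.norm_exp]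
    congr 1
    rw [← Complex.ofReal_pow, ← Complex.ofReal_neg, ← Complex.ofReal_mul, Complex.ofReal_re]
  exact h2.comp_sub_right z

lemma gauss_integral {n : ℕ} {b : ℝ} (hb : 0 < b) (z : Euc n) :
    ∫ x : Euc n, Real.exp (-b * ‖x - z‖ ^ 2) = (π / b) ^ ((n : ℝ) / 2) := by
  rw [integral_sub_right_eq_self (fun x : Euc n => Real.exp (-b * ‖x‖ ^ 2)) z,
    GaussianFourier.integral_rexp_neg_mul_sq_norm hb, finrank_euclideanSpace_fin]

lemma gauss_lintegral {n : ℕ} {b : ℝ} (hb : 0 < b) (z : Euc n) :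
    ∫⁻ x : Euc n, ENNReal.ofReal (Real.exp (-b * ‖x - z‖ ^ 2)) =
      ENNReal.ofReal ((π / b) ^ ((n : ℝ) / 2)) := by
  rw [← gauss_integral hb z, ofReal_integral_eq_lintegral_ofReal (gauss_integrable hb z)]
  exact Filter.Eventually.of_forall fun x => (Real.exp_pos _).le

lemma sph_lintegral_comp (n : ℕ) (L : Euc n ≃ₗᵢ[ℝ] Euc n) (f : Euc n → ℝ≥0∞) :
    ∫⁻ ξ, f (L ξ) ∂(sphMeasure n) = ∫⁻ ξ, f ξ ∂(sphMeasure n) :=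
  (sph_preserving n L).lintegral_comp_emb L.toHomeomorph.measurableEmbedding f

lemma sph_gauss_const {n : ℕ} (a : ℝ) (ξ ξ' : Euc n) (h : ‖ξ‖ = ‖ξ'‖) :
    ∫⁻ η, ENNReal.ofReal (Real.exp (-a * ‖ξ - η‖ ^ 2)) ∂(sphMeasure n) =
    ∫⁻ η, ENNReal.ofReal (Real.exp (-a * ‖ξ' - η‖ ^ 2)) ∂(sphMeasure n) := by
  obtain ⟨L, hL⟩ := exists_isometry_map h
  rw [← sph_lintegral_comp n L (fun η => ENNReal.ofReal (Real.exp (-a * ‖ξ' - η‖ ^ 2)))]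
  refine lintegral_congr fun η => ?_
  rw [← hL, ← map_sub, LinearIsometryEquiv.norm_map]

lemma annulus_volume {n : ℕ} (hn : 2 ≤ n) {t : ℝ} (ht : 0 < t) :
    ENNReal.ofReal t * volume (ball (0 : Euc n) 1) ≤
      volume (ball (0 : Euc n) (1 + t) \ ball (0 : Euc n) 1) := by
  have : Nonempty (Fin n) := ⟨⟨0, by omega⟩⟩
  rw [measure_sdiff (ball_subset_ball (by linarith)) measurableSet_ball.nullMeasurableSet
    measure_ball_lt_top.ne]
  refine ENNReal.le_sub_of_add_le_right measure_ball_lt_top.ne ?_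
  rw [Measure.addHaar_ball volume (0 : Euc n) (by linarith : 0 ≤ 1 + t), finrank_euclideanSpace_fin]
  nth_rewrite 2 [← one_mul (volume (ball (0 : Euc n) 1))]
  rw [← add_mul]
  gcongr
  rw [← ENNReal.ofReal_one, ← ENNReal.ofReal_add ht.le zero_le_one]
  refine ENNReal.ofReal_le_ofReal ?_
  have := one_add_mul_le_pow (by linarith : (-2 : ℝ) ≤ t) n
  have hn' : (2 : ℝ) ≤ n := by exact_mod_cast hn
  nlinarith

lemma sph_gauss_bound {n : ℕ} (hn : 2 ≤ n) [IsFiniteMeasure (sphMeasure n)] :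
    ∃ C, 0 ≤ C ∧ ∀ a : ℝ, 0 < a → ∀ ξ : Euc n, ‖ξ‖ = 1 →
      ∫⁻ η, ENNReal.ofReal (Real.exp (-a * ‖ξ - η‖ ^ 2)) ∂(sphMeasure n) ≤
        ENNReal.ofReal (C * a ^ (-((n : ℝ) - 1) / 2)) := by
  set A := (sphMeasure n).real Set.univ with hA
  have hAe : sphMeasure n Set.univ = ENNReal.ofReal A := by
    rw [hA, Measure.real, ENNReal.ofReal_toReal (measure_ne_top _ _)]
  have hA0 : 0 ≤ A := measureReal_nonneg
  set V := (volume (ball (0 : Euc n) 1)).toReal with hV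
  have hVe : volume (ball (0 : Euc n) 1) = ENNReal.ofReal V := by
    rw [hV, ENNReal.ofReal_toReal measure_ball_lt_top.ne]
  have hV0 : 0 < V := ENNReal.toReal_pos (measure_ball_pos _ _ one_pos).ne' measure_ball_lt_top.ne
  have hn' : (2 : ℝ) ≤ n := by exact_mod_cast hn
  refine ⟨A + A * Real.exp 1 * (2 * π) ^ ((n : ℝ) / 2) / V, by positivity, fun a ha ξ hξ => ?_⟩
  by_cases ha1 : a ≤ 1
  · calc _ ≤ ∫⁻ η, 1 ∂(sphMeasure n) := by
          refine lintegral_mono fun η => ?_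
          rw [← ENNReal.ofReal_one]
          refine ENNReal.ofReal_le_ofReal (Real.exp_le_one_iff.2 ?_)
          have := mul_nonneg ha.le (sq_nonneg ‖ξ - η‖)
          linarith
      _ = ENNReal.ofReal A := by rw [lintegral_one, hAe]
      _ ≤ _ := by
          refine ENNReal.ofReal_le_ofReal ?_
          have h1 : 1 ≤ a ^ (-((n : ℝ) - 1) / 2) :=
            Real.one_le_rpow_of_pos_of_le_one_of_nonpos ha ha1 (by linarith)
          have h2 : 0 ≤ A * Real.exp 1 * (2 * π) ^ ((n : ℝ) / 2) / V := by positivity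
          nlinarith
  · push Not at ha1
    set t := (Real.sqrt a)⁻¹ with ht
    have hs0 : 0 < Real.sqrt a := Real.sqrt_pos.2 ha
    have ht0 : 0 < t := inv_pos.2 hs0
    have hat : a * t ^ 2 = 1 := by
      rw [ht, inv_pow, Real.sq_sqrt ha.le]; field_simp
    set X := ∫⁻ η, ENNReal.ofReal (Real.exp (-a * ‖ξ - η‖ ^ 2)) ∂(sphMeasure n) with hX
    set R := ball (0 : Euc n) (1 + t) \ ball (0 : Euc n) 1 with hR
    have hRm : MeasurableSet R := measurableSet_ball.diff measurableSet_ball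
    have key : X * volume R ≤ ENNReal.ofReal (A * (Real.exp 1 * (π / (a / 2)) ^ ((n : ℝ) / 2))) := by
      calc X * volume R = ∫⁻ x in R, X := by rw [setLIntegral_const]
        _ ≤ ∫⁻ x in R, ∫⁻ η, ENNReal.ofReal (Real.exp 1) *
              ENNReal.ofReal (Real.exp (-(a / 2) * ‖x - η‖ ^ 2)) ∂(sphMeasure n) := by
            refine setLIntegral_mono' hRm fun x hx => ?_
            obtain ⟨hx1, hx2⟩ := hx
            rw [mem_ball_zero_iff] at hx1 hx2
            have hx0 : 0 < ‖x‖ := by linarith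
            rw [hX, sph_gauss_const a ξ (‖x‖⁻¹ • x) (by
              rw [hξ, norm_smul, norm_inv, norm_norm, inv_mul_cancel₀ hx0.ne'])]
            refine lintegral_mono fun η => ?_
            rw [← ENNReal.ofReal_mul (Real.exp_pos _).le, ← Real.exp_add]
            refine ENNReal.ofReal_le_ofReal (Real.exp_le_exp.2 ?_)
            have h1 : ‖x - ‖x‖⁻¹ • x‖ ≤ t := by
              have : x - ‖x‖⁻¹ • x = (1 - ‖x‖⁻¹) • x := by rw [sub_smul, one_smul]
              rw [this, norm_smul, Real.norm_eq_abs, abs_of_nonneg (by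
                rw [sub_nonneg]; exact inv_le_one_of_one_le₀ (by linarith)), sub_mul,
                inv_mul_cancel₀ hx0.ne']
              linarith
            have h2 : ‖x - η‖ ≤ t + ‖‖x‖⁻¹ • x - η‖ := by
              calc ‖x - η‖ = ‖(x - ‖x‖⁻¹ • x) + (‖x‖⁻¹ • x - η)‖ := by congr 1; abel
                _ ≤ _ := (norm_add_le _ _).trans (by linarith)
            have h3 : ‖x - η‖ ^ 2 ≤ 2 * t ^ 2 + 2 * ‖‖x‖⁻¹ • x - η‖ ^ 2 := by
              have := pow_le_pow_left₀ (norm_nonneg _) h2 2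
              nlinarith [sq_nonneg (t - ‖‖x‖⁻¹ • x - η‖)]
            nlinarith
        _ ≤ ∫⁻ x, ∫⁻ η, ENNReal.ofReal (Real.exp 1) *
              ENNReal.ofReal (Real.exp (-(a / 2) * ‖x - η‖ ^ 2)) ∂(sphMeasure n) :=
            setLIntegral_le_lintegral _ _
        _ = ∫⁻ η, (∫⁻ x : Euc n, ENNReal.ofReal (Real.exp 1) *
              ENNReal.ofReal (Real.exp (-(a / 2) * ‖x - η‖ ^ 2))) ∂(sphMeasure n) := by
            refine lintegral_lintegral_swap (Measurable.aemeasurable ?_)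
            simp only [Function.uncurry_def]
            fun_prop
        _ = _ := by
            simp_rw [lintegral_const_mul' _ _ ENNReal.ofReal_ne_top, gauss_lintegral (half_pos ha)]
            rw [lintegral_const, hAe, ← ENNReal.ofReal_mul (by positivity),
              ← ENNReal.ofReal_mul (by positivity)]
            congr 1
            ring
    have h2 : X * ENNReal.ofReal (t * V) ≤
        ENNReal.ofReal (A * (Real.exp 1 * (π / (a / 2)) ^ ((n : ℝ) / 2))) := by
      refine le_trans ?_ key
      gcongr
      rw [ENNReal.ofReal_mul ht0.le, ← hVe]
      exact annulus_volume hn ht0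
    have htV : 0 < t * V := by positivity
    have h3 : X ≤ ENNReal.ofReal (A * (Real.exp 1 * (π / (a / 2)) ^ ((n : ℝ) / 2)) / (t * V)) := by
      rw [ENNReal.ofReal_div_of_pos htV]
      exact ENNReal.le_div_iff_mul_le (Or.inl (by simpa using htV))
        (Or.inl ENNReal.ofReal_ne_top) |>.2 h2
    refine h3.trans (ENNReal.ofReal_le_ofReal ?_)
    have e1 : (π / (a / 2)) ^ ((n : ℝ) / 2) = (2 * π) ^ ((n : ℝ) / 2) * a ^ (-(n : ℝ) / 2) := by
      have : π / (a / 2) = (2 * π) / a := by field_simp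
      rw [this, Real.div_rpow (by positivity) ha.le, neg_div, Real.rpow_neg ha.le]
      field_simp
    have e2 : a ^ (-((n : ℝ) - 1) / 2) = a ^ (-(n : ℝ) / 2) * Real.sqrt a := by
      rw [Real.sqrt_eq_rpow, ← Real.rpow_add ha]; congr 1; ring
    rw [e1, e2, ht]
    have h4 : 0 ≤ A * (a ^ (-(n : ℝ) / 2) * Real.sqrt a) := by positivity
    rw [add_mul]
    refine le_add_of_nonneg_of_le h4 (le_of_eq ?_)
    field_simp


/-! ### The local `L²` estimate and its dual -/

lemma lint_CS {α : Type*} [MeasurableSpace α] (μ : Measure α) (f g : α → ℝ≥0∞)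
    (hf : AEMeasurable f μ) (hg : AEMeasurable g μ) :
    (∫⁻ x, f x * g x ∂μ) ^ 2 ≤ (∫⁻ x, f x ^ 2 ∂μ) * ∫⁻ x, g x ^ 2 ∂μ := by
  have h := ENNReal.lintegral_mul_le_Lp_mul_Lq μ Real.HolderConjugate.two_two hf hg
  simp only [Pi.mul_apply, ENNReal.rpow_two] at h
  calc _ ≤ ((∫⁻ x, f x ^ 2 ∂μ) ^ (1 / (2:ℝ)) * (∫⁻ x, g x ^ 2 ∂μ) ^ (1 / (2:ℝ))) ^ 2 := by gcongr
    _ = _ := by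
      rw [mul_pow, ← ENNReal.rpow_natCast, ← ENNReal.rpow_natCast, ← ENNReal.rpow_mul,
        ← ENNReal.rpow_mul]
      norm_num

lemma enn_amgm (a b : ℝ≥0∞) : a * b ≤ a ^ 2 + b ^ 2 := by
  rcases le_total a b with h | h
  · calc a * b ≤ b * b := by gcongr
      _ = b ^ 2 := (sq b).symm
      _ ≤ _ := le_add_self
  · calc a * b ≤ a * a := by gcongr
      _ = a ^ 2 := (sq a).symm
      _ ≤ _ := le_self_add

lemma enorm_sq_eq (z : ℂ) : ‖z‖ₑ ^ 2 = ENNReal.ofReal (‖z‖ ^ 2) := by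
  rw [ENNReal.ofReal_pow (norm_nonneg _), ofReal_norm]

lemma primal_zero {n : ℕ} (hn : 2 ≤ n) [IsFiniteMeasure (sphMeasure n)] :
    ∃ C, 0 ≤ C ∧ ∀ b : ℝ, 0 < b → ∀ k : Euc n → ℂ, Measurable k → (∃ B, ∀ ξ, ‖k ξ‖ ≤ B) →
      ∫⁻ x, ‖((Real.exp (-b * ‖x‖ ^ 2) : ℝ) : ℂ) * extOp n k x‖ₑ ^ 2 ≤
        ENNReal.ofReal (C * b ^ (-(1 / 2) : ℝ)) * ∫⁻ ξ, ‖k ξ‖ₑ ^ 2 ∂(sphMeasure n) := by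
  obtain ⟨C, hC0, hC⟩ := sph_gauss_bound hn
  have hn' : (2 : ℝ) ≤ n := by exact_mod_cast hn
  refine ⟨2 * ((π / 2) ^ ((n : ℝ) / 2) * (C * 8 ^ (((n : ℝ) - 1) / 2))), by positivity,
    fun b hb k hk ⟨B, hB⟩ => ?_⟩
  have hki : Integrable k (sphMeasure n) :=
    Integrable.of_bound (C := B) hk.aestronglyMeasurable (Filter.Eventually.of_forall hB)
  have h2b : 0 < 2 * b := by linarith
  have hgi : Integrable (fun x : Euc n => Real.exp (-(2 * b) * ‖x‖ ^ 2)) := by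
    simpa using gauss_integrable h2b (0 : Euc n)
  set D := (π / (2 * b)) ^ ((n : ℝ) / 2) with hD
  have hD0 : 0 ≤ D := by positivity
  set a := 1 / (4 * (2 * b)) with ha
  have ha0 : 0 < a := by positivity
  have hgi' : Integrable (fun x : Euc n => ((Real.exp (-(2 * b) * ‖x‖ ^ 2) : ℝ) : ℂ)) := hgi.ofReal
  have hsq := ftr_square (sphMeasure n) volume hki hgi'
  have e1 : ∫⁻ x, ‖((Real.exp (-b * ‖x‖ ^ 2) : ℝ) : ℂ) * extOp n k x‖ₑ ^ 2 =
      ‖∫ x : Euc n, ((‖ftr (sphMeasure n) k x‖ ^ 2 : ℝ) : ℂ) *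
        ((Real.exp (-(2 * b) * ‖x‖ ^ 2) : ℝ) : ℂ)‖ₑ := by
    simp_rw [← Complex.ofReal_mul]
    rw [integral_complex_ofReal, ← ofReal_norm, Complex.norm_real, Real.norm_eq_abs,
      abs_of_nonneg (integral_nonneg fun x => by positivity), ofReal_integral_eq_lintegral_ofReal]
    · refine lintegral_congr fun x => ?_
      rw [enorm_sq_eq, norm_mul, Complex.norm_real, Real.norm_eq_abs, Real.abs_exp, mul_pow,
        ← Real.exp_nat_mul, extOp_eq, mul_comm]
      congr 3
      push_cast; ring
    · refine hgi.bdd_mul (c := (∫ ξ, ‖k ξ‖ ∂(sphMeasure n)) ^ 2) ?_ ?_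
      · exact ((ftr_continuous _ hki).norm.pow 2).aestronglyMeasurable
      · refine Filter.Eventually.of_forall fun x => ?_
        rw [norm_pow, norm_norm]
        exact pow_le_pow_left₀ (norm_nonneg _) (ftr_norm_le _ _ _) 2
    · exact Filter.Eventually.of_forall fun x => by positivity
  rw [e1, hsq]
  have hmeas : Measurable fun z : Euc n × Euc n => ENNReal.ofReal (Real.exp (-a * ‖z.1 - z.2‖ ^ 2)) := by
    fun_prop
  have hS : ∀ᵐ ξ ∂(sphMeasure n), ∫⁻ η, ENNReal.ofReal (Real.exp (-a * ‖ξ - η‖ ^ 2)) ∂(sphMeasure n)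
      ≤ ENNReal.ofReal (C * a ^ (-((n : ℝ) - 1) / 2)) := by
    filter_upwards [sph_ae_norm n] with ξ hξ using hC a ha0 ξ hξ
  set X := ∫⁻ ξ, ‖k ξ‖ₑ ^ 2 ∂(sphMeasure n) with hX
  set S := ENNReal.ofReal (C * a ^ (-((n : ℝ) - 1) / 2)) with hSd
  have i1 : ∫⁻ z, ‖k z.1‖ₑ ^ 2 * ENNReal.ofReal (Real.exp (-a * ‖z.1 - z.2‖ ^ 2))
      ∂((sphMeasure n).prod (sphMeasure n)) ≤ S * X := by
    rw [lintegral_prod _ (Measurable.aemeasurable (by fun_prop)), hX, ← lintegral_const_mul _ (by fun_prop)]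
    refine lintegral_mono_ae ?_
    filter_upwards [hS] with ξ hξ
    rw [lintegral_const_mul _ (by fun_prop), mul_comm]
    gcongr
  have i2 : ∫⁻ z, ‖k z.2‖ₑ ^ 2 * ENNReal.ofReal (Real.exp (-a * ‖z.1 - z.2‖ ^ 2))
      ∂((sphMeasure n).prod (sphMeasure n)) ≤ S * X := by
    rw [lintegral_prod_symm _ (Measurable.aemeasurable (by fun_prop)), hX,
      ← lintegral_const_mul _ (by fun_prop)]
    refine lintegral_mono_ae ?_
    filter_upwards [hS] with ξ hξ
    rw [lintegral_const_mul _ (by fun_prop), mul_comm]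
    simp_rw [norm_sub_rev _ ξ]
    gcongr
  calc _ ≤ ∫⁻ z, ‖(k z.1 * (starRingEnd ℂ) (k z.2)) *
        ftr volume (fun x => ((Real.exp (-(2 * b) * ‖x‖ ^ 2) : ℝ) : ℂ)) (z.1 - z.2)‖ₑ
        ∂((sphMeasure n).prod (sphMeasure n)) := enorm_integral_le_lintegral_enorm _
    _ ≤ ∫⁻ z, ENNReal.ofReal D * (‖k z.1‖ₑ ^ 2 * ENNReal.ofReal (Real.exp (-a * ‖z.1 - z.2‖ ^ 2))
          + ‖k z.2‖ₑ ^ 2 * ENNReal.ofReal (Real.exp (-a * ‖z.1 - z.2‖ ^ 2)))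
        ∂((sphMeasure n).prod (sphMeasure n)) := by
        refine lintegral_mono fun z => ?_
        rw [gauss_ftr h2b, enorm_mul, enorm_mul, RCLike.enorm_conj, ← ofReal_norm (Complex.ofReal _),
          Complex.norm_real, Real.norm_eq_abs, abs_of_nonneg (by positivity), ENNReal.ofReal_mul hD0,
          ← add_mul, ← mul_assoc, mul_comm _ (ENNReal.ofReal D), mul_assoc]
        gcongr
        exact enn_amgm _ _
    _ = ENNReal.ofReal D * (_ + _) := by
        rw [lintegral_const_mul _ (by fun_prop), lintegral_add_left (by fun_prop)]
    _ ≤ ENNReal.ofReal D * (S * X + S * X) := by gcongr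
    _ = ENNReal.ofReal (2 * (D * (C * a ^ (-((n : ℝ) - 1) / 2)))) * X := by
        rw [ENNReal.ofReal_mul zero_le_two, ENNReal.ofReal_mul hD0, ← hSd,
          ENNReal.ofReal_ofNat]
        ring
    _ = _ := by
        congr 2
        have ea : a = (8 * b)⁻¹ := by rw [ha]; field_simp; norm_num
        rw [hD, ea, Real.inv_rpow (by positivity), neg_div, Real.rpow_neg (by positivity), inv_inv,
          Real.mul_rpow (by norm_num) hb.le, ← div_div, Real.div_rpow (by positivity) hb.le]
        have : b ^ (((n : ℝ) - 1) / 2) = b ^ ((n : ℝ) / 2) * b ^ (-(1 / 2) : ℝ) := by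
          rw [← Real.rpow_add hb]; congr 1; ring
        rw [this]
        have h1 : b ^ ((n : ℝ) / 2) ≠ 0 := by positivity
        field_simp

lemma primal {n : ℕ} (hn : 2 ≤ n) [IsFiniteMeasure (sphMeasure n)] :
    ∃ C, 0 ≤ C ∧ ∀ b : ℝ, 0 < b → ∀ z : Euc n, ∀ k : Euc n → ℂ, Measurable k →
      (∃ B, ∀ ξ, ‖k ξ‖ ≤ B) →
      ∫⁻ x, ‖((Real.exp (-b * ‖x - z‖ ^ 2) : ℝ) : ℂ) * extOp n k x‖ₑ ^ 2 ≤
        ENNReal.ofReal (C * b ^ (-(1 / 2) : ℝ)) * ∫⁻ ξ, ‖k ξ‖ₑ ^ 2 ∂(sphMeasure n) := by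
  obtain ⟨C, hC0, hC⟩ := primal_zero hn
  refine ⟨C, hC0, fun b hb z k hk ⟨B, hB⟩ => ?_⟩
  have h := hC b hb (fun ξ => Complex.exp (Complex.I * (⟪z, ξ⟫ : ℝ)) * k ξ) (by fun_prop)
    ⟨B, fun ξ => by rw [norm_mul, phase_norm, one_mul]; exact hB ξ⟩
  rw [← lintegral_add_right_eq_self _ z]
  have e1 : ∀ x : Euc n, extOp n k (x + z) =
      extOp n (fun ξ => Complex.exp (Complex.I * (⟪z, ξ⟫ : ℝ)) * k ξ) x := by
    intro x
    simp only [extOp]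
    refine integral_congr_ae (Filter.Eventually.of_forall fun ξ => ?_)
    simp only
    rw [inner_add_left, Complex.ofReal_add, mul_add, Complex.exp_add, mul_assoc]
  have e2 : ∀ ξ : Euc n, ‖Complex.exp (Complex.I * (⟪z, ξ⟫ : ℝ)) * k ξ‖ₑ = ‖k ξ‖ₑ := by
    intro ξ
    rw [← ofReal_norm, norm_mul, phase_norm, one_mul, ofReal_norm]
  simp_rw [e1, add_sub_cancel_right]
  simp_rw [e2] at h
  exact h

lemma dual_bound {n : ℕ} [IsFiniteMeasure (sphMeasure n)] (V : Euc n → ℝ) (hV : Measurable V)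
    (M : ℝ≥0∞)
    (hM : ∀ k : Euc n → ℂ, Measurable k → (∃ B, ∀ ξ, ‖k ξ‖ ≤ B) →
      ∫⁻ x, ‖(V x : ℂ) * extOp n k x‖ₑ ^ 2 ≤ M * ∫⁻ ξ, ‖k ξ‖ₑ ^ 2 ∂(sphMeasure n))
    (H : Euc n → ℂ) (hH : Measurable H) (hI : Integrable (fun x => (V x : ℂ) * H x)) :
    ∫⁻ ξ, ‖ftr volume (fun x => (V x : ℂ) * H x) ξ‖ₑ ^ 2 ∂(sphMeasure n) ≤
      M * ∫⁻ x, ‖H x‖ₑ ^ 2 := by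
  set P := ftr volume (fun x => (V x : ℂ) * H x) with hP
  have hPc : Continuous P := ftr_continuous _ hI
  set B := ∫ x, ‖(V x : ℂ) * H x‖ with hB
  have hPB : ∀ ξ, ‖P ξ‖ ≤ B := fun ξ => ftr_norm_le _ _ _
  set k : Euc n → ℂ := fun ξ => (starRingEnd ℂ) (P ξ) with hk
  have hkc : Continuous k := Complex.continuous_conj.comp hPc
  have hkB : ∀ ξ, ‖k ξ‖ ≤ B := fun ξ => by simpa [hk] using hPB ξ
  have hki : Integrable k (sphMeasure n) :=
    Integrable.of_bound (C := B) hkc.aestronglyMeasurable (Filter.Eventually.of_forall hkB)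
  set X := ∫⁻ ξ, ‖P ξ‖ₑ ^ 2 ∂(sphMeasure n) with hX
  have hXk : ∫⁻ ξ, ‖k ξ‖ₑ ^ 2 ∂(sphMeasure n) = X := by
    simp [hX, hk, RCLike.enorm_conj]
  have hXfin : X ≠ ∞ := by
    refine ne_of_lt (lt_of_le_of_lt (lintegral_mono (g := fun _ => ENNReal.ofReal (B ^ 2)) ?_) ?_)
    · intro ξ
      simp only
      rw [enorm_sq_eq]
      exact ENNReal.ofReal_le_ofReal (pow_le_pow_left₀ (norm_nonneg _) (hPB ξ) 2)
    · rw [lintegral_const]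
      exact ENNReal.mul_lt_top ENNReal.ofReal_lt_top (measure_lt_top _ _)
  have hpair : ∫ ξ, P ξ * k ξ ∂(sphMeasure n) =
      ∫ x, ((V x : ℂ) * H x) * ftr (sphMeasure n) k x :=
    ftr_pairing volume (sphMeasure n) hI hki
  have hXe : X = ‖∫ ξ, P ξ * k ξ ∂(sphMeasure n)‖ₑ := by
    have : ∀ ξ, P ξ * k ξ = ((‖P ξ‖ ^ 2 : ℝ) : ℂ) := fun ξ => by
      simp only [hk]
      rw [Complex.mul_conj, Complex.normSq_eq_norm_sq]
    simp_rw [this]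
    rw [integral_complex_ofReal, ← ofReal_norm, Complex.norm_real, Real.norm_eq_abs,
      abs_of_nonneg (integral_nonneg fun x => by positivity), ofReal_integral_eq_lintegral_ofReal]
    · simp_rw [hX, enorm_sq_eq]
    · refine Integrable.of_bound (C := B ^ 2) (hPc.norm.pow 2).aestronglyMeasurable
        (Filter.Eventually.of_forall fun ξ => ?_)
      rw [norm_pow, norm_norm]
      exact pow_le_pow_left₀ (norm_nonneg _) (hPB ξ) 2
    · exact Filter.Eventually.of_forall fun x => by positivity
  have hTc : Continuous (extOp n k) := ftr_continuous _ hki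
  have h1 : X ≤ ∫⁻ x, ‖H x‖ₑ * ‖(V x : ℂ) * extOp n k x‖ₑ := by
    rw [hXe, hpair]
    refine (enorm_integral_le_lintegral_enorm _).trans (le_of_eq ?_)
    refine lintegral_congr fun x => ?_
    rw [extOp_eq]
    simp only [enorm_mul]
    ring
  have h2 : X ^ 2 ≤ (∫⁻ x, ‖H x‖ₑ ^ 2) * (M * X) := by
    calc X ^ 2 ≤ (∫⁻ x, ‖H x‖ₑ * ‖(V x : ℂ) * extOp n k x‖ₑ) ^ 2 := by gcongr
      _ ≤ (∫⁻ x, ‖H x‖ₑ ^ 2) * ∫⁻ x, ‖(V x : ℂ) * extOp n k x‖ₑ ^ 2 := by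
          refine lint_CS _ _ _ hH.enorm.aemeasurable ?_
          have := hTc.measurable
          exact Measurable.aemeasurable (by fun_prop)
      _ ≤ _ := by
          gcongr
          rw [← hXk]
          exact hM k hkc.measurable ⟨B, hkB⟩
  by_cases hX0 : X = 0
  · rw [hX0]; exact bot_le
  · have h3 : X * X ≤ (M * ∫⁻ x, ‖H x‖ₑ ^ 2) * X := by
      rw [← sq]; refine h2.trans (le_of_eq (by ring))
    exact (ENNReal.mul_le_mul_iff_left hX0 hXfin).1 h3



/-! ### The weighted `L²` estimate -/

/-- The Japanese bracket. -/
def jb {n : ℕ} (x : Euc n) : ℝ := Real.sqrt (1 + ‖x‖ ^ 2)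

lemma jb_pos {n : ℕ} (x : Euc n) : 0 < jb x := Real.sqrt_pos.2 (by positivity)

lemma jb_sq {n : ℕ} (x : Euc n) : jb x ^ 2 = 1 + ‖x‖ ^ 2 := Real.sq_sqrt (by positivity)

lemma jb_cont {n : ℕ} : Continuous (jb : Euc n → ℝ) := by unfold jb; fun_prop

lemma jb_rpow_meas {n : ℕ} (s : ℝ) : Measurable (fun x : Euc n => jb x ^ s) :=
  jb_cont.measurable.pow_const s

/-- Truncated weight. -/
def wt {n : ℕ} (γ R : ℝ) (x : Euc n) : ℝ := if jb x ≤ R then jb x ^ (-γ) else 0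

lemma wt_meas {n : ℕ} (γ R : ℝ) : Measurable (wt γ R : Euc n → ℝ) :=
  Measurable.ite (measurableSet_le jb_cont.measurable measurable_const) (jb_rpow_meas _)
    measurable_const

lemma wt_bound {n : ℕ} (γ R : ℝ) (hγ : 0 < γ) (x : Euc n) :
    ENNReal.ofReal (wt γ R x ^ 2) ≤ ENNReal.ofReal (2 ^ (2 * γ + 1) * Real.exp 2) *
      ∫⁻ ρ in Set.Ioc 0 (2 * R), ENNReal.ofReal (ρ ^ (-(2 * γ) - 1)) *
        ENNReal.ofReal (Real.exp (-(2 * (ρ⁻¹) ^ 2) * ‖x‖ ^ 2)) := by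
  unfold wt
  split_ifs with h
  · have hj := jb_pos x
    set j := jb x with hjd
    have h1 : Set.Ioc j (2 * j) ⊆ Set.Ioc 0 (2 * R) := by
      intro ρ hρ
      exact ⟨hj.trans hρ.1, hρ.2.trans (by linarith)⟩
    calc ENNReal.ofReal ((j ^ (-γ)) ^ 2)
        = ENNReal.ofReal (2 ^ (2 * γ + 1) * Real.exp 2) *
          (ENNReal.ofReal ((2 * j) ^ (-(2 * γ) - 1)  * Real.exp (-2)) * ENNReal.ofReal j) := by
          rw [← ENNReal.ofReal_mul (by positivity), ← ENNReal.ofReal_mul (by positivity)]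
          congr 1
          rw [Real.mul_rpow (by norm_num) hj.le, Real.exp_neg, ← Real.rpow_natCast, ← Real.rpow_mul hj.le,
            show -(2 * γ) - 1 = -(2 * γ + 1) by ring, Real.rpow_neg (by norm_num),
            show -(2 * γ + 1) = -γ * (2 : ℕ) + (-1) by push_cast; ring, Real.rpow_add hj, Real.rpow_neg_one]
          have : (2 : ℝ) ^ (2 * γ + 1) ≠ 0 := by positivity
          field_simp
      _ = ENNReal.ofReal (2 ^ (2 * γ + 1) * Real.exp 2) *
          ∫⁻ ρ in Set.Ioc j (2 * j), ENNReal.ofReal ((2 * j) ^ (-(2 * γ) - 1)  * Real.exp (-2)) := by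
          rw [setLIntegral_const, Real.volume_Ioc]
          congr 3
          ring
      _ ≤ ENNReal.ofReal (2 ^ (2 * γ + 1) * Real.exp 2) *
          ∫⁻ ρ in Set.Ioc j (2 * j), ENNReal.ofReal (ρ ^ (-(2 * γ) - 1)) *
            ENNReal.ofReal (Real.exp (-(2 * (ρ⁻¹) ^ 2) * ‖x‖ ^ 2)) := by
          gcongr 1
          refine setLIntegral_mono' measurableSet_Ioc fun ρ hρ => ?_
          have hρ0 : 0 < ρ := hj.trans hρ.1
          rw [← ENNReal.ofReal_mul (by positivity)]
          apply ENNReal.ofReal_le_ofReal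
          refine mul_le_mul ?_ ?_ (Real.exp_pos _).le (by positivity)
          · exact Real.rpow_le_rpow_of_nonpos hρ0 hρ.2 (by linarith)
          · apply Real.exp_le_exp.2
            have h2 : ‖x‖ ^ 2 ≤ ρ ^ 2 := by
              have := jb_sq x
              have : j ^ 2 ≤ ρ ^ 2 := pow_le_pow_left₀ hj.le hρ.1.le 2
              linarith
            have h3 : (ρ⁻¹) ^ 2 * ‖x‖ ^ 2 ≤ 1 := by
              rw [inv_pow, inv_mul_le_iff₀ (by positivity)]
              linarith
            linarith
      _ ≤ _ := by
          gcongr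
  · simp

lemma rpow_lint {s a : ℝ} (hs : -1 < s) (ha : 0 < a) :
    ∫⁻ ρ in Set.Ioc 0 a, ENNReal.ofReal (ρ ^ s) = ENNReal.ofReal (a ^ (s + 1) / (s + 1)) := by
  have h := integral_rpow (a := 0) (b := a) (r := s) (Or.inl hs)
  rw [Real.zero_rpow (by linarith), sub_zero, intervalIntegral.integral_of_le ha.le] at h
  rw [← h, ofReal_integral_eq_lintegral_ofReal]
  · exact (intervalIntegrable_iff_integrableOn_Ioc_of_le ha.le).1
      (intervalIntegral.intervalIntegrable_rpow' hs)
  · filter_upwards [ae_restrict_mem measurableSet_Ioc] with ρ hρ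
    exact Real.rpow_nonneg hρ.1.le _

lemma primal_weighted {n : ℕ} (hn : 2 ≤ n) [IsFiniteMeasure (sphMeasure n)] {γ : ℝ} (hγ : 0 < γ)
    (hγ2 : γ < 1 / 2) :
    ∃ C, 0 ≤ C ∧ ∀ R : ℝ, 0 < R → ∀ k : Euc n → ℂ, Measurable k →
      (∃ B, ∀ ξ, ‖k ξ‖ ≤ B) →
      ∫⁻ x, ‖(wt γ R x : ℂ) * extOp n k x‖ₑ ^ 2 ≤
        ENNReal.ofReal (C * R ^ (1 - 2 * γ)) * ∫⁻ ξ, ‖k ξ‖ₑ ^ 2 ∂(sphMeasure n) := by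
  obtain ⟨C, hC0, hC⟩ := primal hn
  have h12 : 0 < 1 - 2 * γ := by linarith
  refine ⟨(2 ^ (2 * γ + 1) * Real.exp 2) * (C * (2 ^ (1 - 2 * γ) / (1 - 2 * γ))), by positivity,
    fun R hR k hk hB => ?_⟩
  set K := 2 ^ (2 * γ + 1) * Real.exp 2 with hK
  have hK0 : 0 ≤ K := by positivity
  set X := ∫⁻ ξ, ‖k ξ‖ₑ ^ 2 ∂(sphMeasure n) with hX
  have hki : Integrable k (sphMeasure n) := by
    obtain ⟨B, hB⟩ := hB
    exact Integrable.of_bound (C := B) hk.aestronglyMeasurable (Filter.Eventually.of_forall hB)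
  have hTm : Measurable (extOp n k) := (ftr_continuous _ hki).measurable
  have hjm : Measurable fun z : Euc n × ℝ => ENNReal.ofReal (z.2 ^ (-(2 * γ) - 1)) *
        ENNReal.ofReal (Real.exp (-(2 * (z.2⁻¹) ^ 2) * ‖z.1‖ ^ 2)) * ‖extOp n k z.1‖ₑ ^ 2 := by
    fun_prop
  calc ∫⁻ x, ‖(wt γ R x : ℂ) * extOp n k x‖ₑ ^ 2
      = ∫⁻ x, ENNReal.ofReal (wt γ R x ^ 2) * ‖extOp n k x‖ₑ ^ 2 := by
        refine lintegral_congr fun x => ?_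
        rw [enorm_mul, mul_pow, enorm_sq_eq, Complex.norm_real, Real.norm_eq_abs, sq_abs]
    _ ≤ ∫⁻ x, ENNReal.ofReal K * ∫⁻ ρ in Set.Ioc 0 (2 * R), ENNReal.ofReal (ρ ^ (-(2 * γ) - 1)) *
        ENNReal.ofReal (Real.exp (-(2 * (ρ⁻¹) ^ 2) * ‖x‖ ^ 2)) * ‖extOp n k x‖ₑ ^ 2 := by
        refine lintegral_mono fun x => ?_
        rw [lintegral_mul_const _ (by fun_prop), ← mul_assoc]
        gcongr
        exact wt_bound γ R hγ x
    _ = ENNReal.ofReal K * ∫⁻ ρ in Set.Ioc 0 (2 * R), ∫⁻ x, ENNReal.ofReal (ρ ^ (-(2 * γ) - 1)) *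
        ENNReal.ofReal (Real.exp (-(2 * (ρ⁻¹) ^ 2) * ‖x‖ ^ 2)) * ‖extOp n k x‖ₑ ^ 2 := by
        rw [lintegral_const_mul _ hjm.lintegral_prod_right', lintegral_lintegral_swap hjm.aemeasurable]
    _ ≤ ENNReal.ofReal K * ∫⁻ ρ in Set.Ioc 0 (2 * R),
          ENNReal.ofReal (ρ ^ (-(2 * γ))) * (ENNReal.ofReal C * X) := by
        gcongr 1
        refine setLIntegral_mono' measurableSet_Ioc fun ρ hρ => ?_
        have hρ0 : 0 < ρ := hρ.1
        have h := hC (ρ⁻¹ ^ 2) (by positivity) 0 k hk hB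
        have e1 : ∀ x, ‖((Real.exp (-(ρ⁻¹ ^ 2) * ‖x - 0‖ ^ 2) : ℝ) : ℂ) * extOp n k x‖ₑ ^ 2 =
            ENNReal.ofReal (Real.exp (-(2 * (ρ⁻¹) ^ 2) * ‖x‖ ^ 2)) * ‖extOp n k x‖ₑ ^ 2 := by
          intro x
          rw [enorm_mul, mul_pow, enorm_sq_eq, Complex.norm_real, Real.norm_eq_abs, sq_abs, sub_zero,
            ← Real.exp_nat_mul]
          congr 3
          push_cast; ring
        simp_rw [e1] at h
        simp_rw [mul_assoc]
        rw [lintegral_const_mul _ (by fun_prop)]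
        calc _ ≤ ENNReal.ofReal (ρ ^ (-(2 * γ) - 1)) *
              (ENNReal.ofReal (C * (ρ⁻¹ ^ 2) ^ (-(1 / 2) : ℝ)) * X) := by gcongr
          _ = _ := by
            rw [← mul_assoc, ← mul_assoc, ← ENNReal.ofReal_mul (by positivity),
              ← ENNReal.ofReal_mul (by positivity)]
            congr 2
            rw [Real.rpow_sub_one hρ0.ne', ← Real.rpow_natCast, ← Real.rpow_mul (by positivity)]
            norm_num
            rw [Real.rpow_neg_one]
            field_simp
    _ = _ := by
        rw [lintegral_mul_const _ (by fun_prop), rpow_lint (by linarith) (by linarith), ← mul_assoc,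
          ← mul_assoc, ← ENNReal.ofReal_mul hK0, ← ENNReal.ofReal_mul (by
            have : 0 < -(2 * γ) + 1 := by linarith
            positivity)]
        congr 2
        rw [show -(2 * γ) + 1 = 1 - 2 * γ by ring, Real.mul_rpow (by norm_num) hR.le]
        ring

lemma integrable_of_le_ind {n : ℕ} {E : Set (Euc n)} (hE : MeasurableSet E) (hfin : volume E < ∞)
    {H : Euc n → ℂ} (hH : Measurable H) {A : ℝ} (hA : ∀ x, ‖H x‖ ≤ E.indicator (fun _ => A) x) :
    Integrable H := by
  refine Integrable.mono' (g := E.indicator (fun _ => A)) ?_ hH.aestronglyMeasurable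
    (Filter.Eventually.of_forall hA)
  exact (integrable_indicator_iff hE).2 (integrableOn_const hfin.ne)

lemma dual_weighted {n : ℕ} (hn : 2 ≤ n) [IsFiniteMeasure (sphMeasure n)] {γ : ℝ} (hγ : 0 < γ)
    (hγ2 : γ < 1 / 2) :
    ∃ C, 0 ≤ C ∧ ∀ R : ℝ, 0 < R → ∀ E : Set (Euc n), MeasurableSet E → volume E < ∞ →
      ∀ H : Euc n → ℂ, Measurable H → (∀ x, ‖H x‖ ≤ E.indicator (fun x => jb x ^ (-γ)) x) →
      (∀ x, R < jb x → H x = 0) →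
      ∫⁻ ξ, ‖ftr volume H ξ‖ₑ ^ 2 ∂(sphMeasure n) ≤
        ENNReal.ofReal (C * R ^ (1 - 2 * γ)) * volume E := by
  obtain ⟨C, hC0, hC⟩ := primal_weighted hn hγ hγ2
  refine ⟨C, hC0, fun R hR E hE hfin H hH hHE hHR => ?_⟩
  have e1 : (fun x => (wt γ R x : ℂ) * (((jb x ^ γ : ℝ) : ℂ) * H x)) = H := by
    ext x
    unfold wt
    split_ifs with h
    · rw [← mul_assoc, ← Complex.ofReal_mul, ← Real.rpow_add (jb_pos x)]
      simp
    · rw [hHR x (not_le.1 h)]; simp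
  have hI : Integrable H := by
    refine integrable_of_le_ind hE hfin hH (A := 1) fun x => (hHE x).trans ?_
    refine Set.indicator_le_indicator' fun _ => ?_
    refine Real.rpow_le_one_of_one_le_of_nonpos ?_ (by linarith)
    unfold jb
    exact Real.one_le_sqrt.2 (by nlinarith [sq_nonneg ‖x‖])
  have hjm : Measurable (fun x : Euc n => jb x ^ γ) := jb_rpow_meas γ
  have h := dual_bound (wt γ R) (wt_meas γ R) _ (hC R hR)
    (fun x => ((jb x ^ γ : ℝ) : ℂ) * H x) (by fun_prop) (by rw [e1]; exact hI)
  rw [e1] at h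
  refine h.trans ?_
  gcongr
  calc ∫⁻ x, ‖((jb x ^ γ : ℝ) : ℂ) * H x‖ₑ ^ 2 ≤ ∫⁻ x, E.indicator 1 x := by
        refine lintegral_mono fun x => ?_
        simp only
        have h1 := hHE x
        have hj := jb_pos x
        by_cases hx : x ∈ E
        · rw [Set.indicator_of_mem hx] at h1 ⊢
          rw [enorm_sq_eq, Pi.one_apply, ← ENNReal.ofReal_one]
          apply ENNReal.ofReal_le_ofReal
          have : ‖((jb x ^ γ : ℝ) : ℂ) * H x‖ ≤ 1 := by
            rw [norm_mul, Complex.norm_real, Real.norm_eq_abs, abs_of_pos (by positivity)]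
            calc _ ≤ jb x ^ γ * jb x ^ (-γ) := by gcongr
              _ = 1 := by rw [← Real.rpow_add hj]; simp
          exact pow_le_one₀ (norm_nonneg _) this
        · rw [Set.indicator_of_notMem hx] at h1 ⊢
          have : H x = 0 := norm_le_zero_iff.1 h1
          simp [this]
    _ = volume E := lintegral_indicator_one hE


/-! ### The dual Stein-Tomas estimate -/

lemma ftr_one {n : ℕ} [IsFiniteMeasure (sphMeasure n)] (x : Euc n) :
    ftr (sphMeasure n) (fun _ => (1 : ℂ)) x = (sphCos n x : ℂ) := by
  rw [← sph_char x]; simp [ftr]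

lemma sphCos_cont {n : ℕ} [IsFiniteMeasure (sphMeasure n)] : Continuous (sphCos n) := by
  have h : Continuous (ftr (sphMeasure n) (fun _ => (1 : ℂ))) :=
    ftr_continuous _ (integrable_const _)
  have h2 := Complex.continuous_re.comp h
  convert h2 using 1
  ext x
  simp [ftr_one]

/-- The kernel `G ⊗ conj G`. -/
def tens {n : ℕ} (G : Euc n → ℂ) (z : Euc n × Euc n) : ℂ := G z.1 * (starRingEnd ℂ) (G z.2)

lemma tens_norm {n : ℕ} (G : Euc n → ℂ) (z : Euc n × Euc n) :
    ‖tens G z‖ = ‖G z.1‖ * ‖G z.2‖ := by simp [tens]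

lemma tens_meas {n : ℕ} {G : Euc n → ℂ} (hG : Measurable G) : Measurable (tens G) := by
  unfold tens
  have : Measurable (starRingEnd ℂ) := Complex.continuous_conj.measurable
  fun_prop

lemma tens_integrable {n : ℕ} {G : Euc n → ℂ} (hG : Integrable G) :
    Integrable (tens G) (volume.prod volume) := by
  have hc : Integrable (fun x => (starRingEnd ℂ) (G x)) := by
    refine (integrable_norm_iff ?_).1 ?_
    · exact Complex.continuous_conj.comp_aestronglyMeasurable hG.aestronglyMeasurable
    · simpa using hG.norm
  exact hG.mul_prod hc

lemma ftr_sq_eq {n : ℕ} [IsFiniteMeasure (sphMeasure n)] {G : Euc n → ℂ} (hG : Integrable G) :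
    ∫⁻ ξ, ‖ftr volume G ξ‖ₑ ^ 2 ∂(sphMeasure n) =
      ‖∫ z, tens G z * (sphCos n (z.1 - z.2) : ℂ) ∂(volume.prod volume)‖ₑ := by
  have h := ftr_square volume (sphMeasure n) hG (K := fun _ => (1 : ℂ)) (integrable_const _)
  simp_rw [ftr_one, mul_one] at h
  simp only [tens]
  rw [← h, integral_complex_ofReal, ← ofReal_norm, Complex.norm_real, Real.norm_eq_abs,
    abs_of_nonneg (integral_nonneg fun x => by positivity), ofReal_integral_eq_lintegral_ofReal]
  · simp_rw [enorm_sq_eq]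
  · refine Integrable.of_bound (C := (∫ x, ‖G x‖) ^ 2)
      ((ftr_continuous _ hG).norm.pow 2).aestronglyMeasurable
      (Filter.Eventually.of_forall fun ξ => ?_)
    rw [norm_pow, norm_norm]
    exact pow_le_pow_left₀ (norm_nonneg _) (ftr_norm_le _ _ _) 2
  · exact Filter.Eventually.of_forall fun x => by positivity

lemma parallelogram_gauss {n : ℕ} (b : ℝ) (x y w : Euc n) :
    Real.exp (-(2 * b) * ‖x - w‖ ^ 2) * Real.exp (-(2 * b) * ‖y - w‖ ^ 2) =
      Real.exp (-b * ‖x - y‖ ^ 2) * Real.exp (-(4 * b) * ‖w - (1 / 2 : ℝ) • (x + y)‖ ^ 2) := by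
  rw [← Real.exp_add, ← Real.exp_add]
  congr 1
  have h := parallelogram_law_with_norm ℝ (x - w) (y - w)
  have h1 : (x - w) - (y - w) = x - y := by abel
  have h2 : (x - w) + (y - w) = -((2 : ℝ) • (w - (1 / 2 : ℝ) • (x + y))) := by
    rw [smul_sub, smul_smul]; norm_num; rw [two_smul]; abel
  rw [h1, h2, norm_neg, norm_smul] at h
  norm_num at h
  norm_num
  linear_combination b * h

lemma gauss_piece {n : ℕ} (hn : 2 ≤ n) [IsFiniteMeasure (sphMeasure n)] :
    ∃ C, 0 ≤ C ∧ ∀ b : ℝ, 0 < b → ∀ H : Euc n → ℂ, Measurable H → Integrable H →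
      ‖∫ z, tens H z * ((sphCos n (z.1 - z.2) * Real.exp (-b * ‖z.1 - z.2‖ ^ 2) : ℝ) : ℂ)
        ∂(volume.prod volume)‖ₑ ≤
        ENNReal.ofReal (C * b ^ (-(1 / 2) : ℝ)) * ∫⁻ x, ‖H x‖ₑ ^ 2 := by
  obtain ⟨C, hC0, hC⟩ := primal hn
  refine ⟨2 ^ ((n : ℝ) / 2) * C, by positivity, fun b hb H hHm hH => ?_⟩
  set D := (π / (4 * b)) ^ ((n : ℝ) / 2) with hD
  have hD0 : 0 < D := by positivity
  set V : Euc n → Euc n → ℝ := fun w x => Real.exp (-b * ‖x - w‖ ^ 2) with hV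
  set G : Euc n → Euc n → ℂ := fun w x => (V w x : ℂ) * ((V w x : ℂ) * H x) with hG
  have hVm : ∀ w, Measurable (V w) := fun w => by simp only [hV]; fun_prop
  have hV1 : ∀ w x, ‖(V w x : ℂ)‖ ≤ 1 := fun w x => by
    rw [Complex.norm_real, Real.norm_eq_abs, Real.abs_exp]
    apply Real.exp_le_one_iff.2
    have : 0 ≤ b * ‖x - w‖ ^ 2 := by positivity
    linarith
  have hGi : ∀ w, Integrable (G w) := fun w => by
    refine hH.mono (Measurable.aestronglyMeasurable ?_) (Filter.Eventually.of_forall fun x => ?_)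
    · have := hVm w
      simp only [hG]; fun_prop
    · simp only [hG]
      rw [norm_mul, norm_mul]
      have := hV1 w x
      calc _ ≤ 1 * (1 * ‖H x‖) := by gcongr
        _ = _ := by ring
  have hcos : Continuous (sphCos n) := sphCos_cont
  set kk : Euc n × Euc n → ℝ := fun z => sphCos n (z.1 - z.2) * Real.exp (-b * ‖z.1 - z.2‖ ^ 2) with hkk
  have hkc : Continuous kk := by simp only [hkk]; fun_prop
  -- the triple integrand
  set F : (Euc n × Euc n) → Euc n → ℂ := fun z w =>
    (tens H z * (kk z : ℂ)) * ((Real.exp (-(4 * b) * ‖w - (1 / 2 : ℝ) • (z.1 + z.2)‖ ^ 2) : ℝ) : ℂ) with hF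
  have htm := tens_meas hHm
  have hkm := hkc.measurable
  have hFm : Measurable (Function.uncurry F) := by
    simp only [hF, Function.uncurry_def]; fun_prop
  have hti : Integrable (fun z => tens H z * (kk z : ℂ)) (volume.prod volume) := by
    refine (tens_integrable hH).mul_bdd (c := (sphMeasure n).real Set.univ) ?_ ?_
    · exact (Complex.continuous_ofReal.comp hkc).aestronglyMeasurable
    · refine Filter.Eventually.of_forall fun z => ?_
      rw [Complex.norm_real, Real.norm_eq_abs, hkk, abs_mul, Real.abs_exp]
      have h1 := sphCos_abs_le (z.1 - z.2)
      have h2 : Real.exp (-b * ‖z.1 - z.2‖ ^ 2) ≤ 1 := by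
        apply Real.exp_le_one_iff.2
        have : 0 ≤ b * ‖z.1 - z.2‖ ^ 2 := by positivity
        linarith
      calc _ ≤ (sphMeasure n).real Set.univ * 1 := by gcongr
        _ = _ := mul_one _
  have hFi : Integrable (Function.uncurry F) ((volume.prod volume).prod volume) := by
    refine ⟨hFm.aestronglyMeasurable, ?_⟩
    rw [HasFiniteIntegral, lintegral_prod _ hFm.enorm.aemeasurable]
    simp only [Function.uncurry_apply_pair, hF, enorm_mul (tens H _ * _)]
    have h4 : ∀ z : Euc n × Euc n, ∫⁻ w : Euc n, ‖tens H z * (kk z : ℂ)‖ₑ *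
        ‖((Real.exp (-(4 * b) * ‖w - (1 / 2 : ℝ) • (z.1 + z.2)‖ ^ 2) : ℝ) : ℂ)‖ₑ =
        ‖tens H z * (kk z : ℂ)‖ₑ * ENNReal.ofReal D := by
      intro z
      rw [lintegral_const_mul _ (by fun_prop), hD, ← gauss_lintegral (by positivity) ((1 / 2 : ℝ) • (z.1 + z.2))]
      congr 1
      refine lintegral_congr fun w => ?_
      rw [← ofReal_norm, Complex.norm_real, Real.norm_eq_abs, Real.abs_exp]
    simp_rw [h4]
    rw [lintegral_mul_const _ (by fun_prop)]
    exact ENNReal.mul_lt_top hti.2 ENNReal.ofReal_lt_top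
  have e1 : ∫ z, ∫ w, F z w ∂(volume : Measure (Euc n)) ∂(volume.prod volume) =
      (∫ z, tens H z * (kk z : ℂ) ∂(volume.prod volume)) * (D : ℂ) := by
    rw [← integral_mul_const]
    refine integral_congr_ae (Filter.Eventually.of_forall fun z => ?_)
    simp only [hF]
    rw [integral_const_mul, integral_complex_ofReal, gauss_integral (by positivity)]
  have e2 : ∀ w, ∫ z, F z w ∂(volume.prod volume) =
      ∫ z, tens (G w) z * (sphCos n (z.1 - z.2) : ℂ) ∂(volume.prod volume) := by
    intro w
    refine integral_congr_ae (Filter.Eventually.of_forall fun z => ?_)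
    simp only [hF, hkk, tens, hG, hV, map_mul, Complex.conj_ofReal]
    have h := parallelogram_gauss b z.1 z.2 w
    have h2 : ∀ x : Euc n, Real.exp (-(2 * b) * ‖x - w‖ ^ 2) =
        Real.exp (-b * ‖x - w‖ ^ 2) * Real.exp (-b * ‖x - w‖ ^ 2) := fun x => by
      rw [← Real.exp_add]; congr 1; ring
    rw [h2, h2] at h
    have h' := congrArg (fun t : ℝ => (t : ℂ)) h
    simp only [Complex.ofReal_mul] at h' ⊢
    linear_combination (-(H z.1 * (starRingEnd ℂ) (H z.2) * (sphCos n (z.1 - z.2) : ℂ))) * h'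
  rw [integral_integral_swap hFi] at e1
  have key : ‖∫ z, tens H z * (kk z : ℂ) ∂(volume.prod volume)‖ₑ * ENNReal.ofReal D ≤
      (ENNReal.ofReal (2 ^ ((n : ℝ) / 2) * C * b ^ (-(1 / 2) : ℝ)) * ∫⁻ x, ‖H x‖ₑ ^ 2)
        * ENNReal.ofReal D := by
    calc _ = ‖(∫ z, tens H z * (kk z : ℂ) ∂(volume.prod volume)) * (D : ℂ)‖ₑ := by
          rw [enorm_mul, ← ofReal_norm (D : ℂ), Complex.norm_real, Real.norm_eq_abs, abs_of_pos hD0]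
      _ = ‖∫ w, ∫ z, F z w ∂(volume.prod volume)‖ₑ := by rw [e1]
      _ ≤ ∫⁻ w, ‖∫ z, F z w ∂(volume.prod volume)‖ₑ := enorm_integral_le_lintegral_enorm _
      _ ≤ ∫⁻ w, ENNReal.ofReal (C * b ^ (-(1 / 2) : ℝ)) *
            ∫⁻ x, ENNReal.ofReal (Real.exp (-(2 * b) * ‖w - x‖ ^ 2)) * ‖H x‖ₑ ^ 2 := by
          refine lintegral_mono fun w => ?_
          simp only
          rw [e2 w, ← ftr_sq_eq (hGi w)]
          refine (dual_bound (V w) (hVm w) _ (fun k hk hB => hC b hb w k hk hB)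
            (fun x => (V w x : ℂ) * H x) ?_ (hGi w)).trans (le_of_eq ?_)
          · have := hVm w
            fun_prop
          · congr 1
            refine lintegral_congr fun x => ?_
            rw [enorm_mul, mul_pow, enorm_sq_eq, Complex.norm_real, Real.norm_eq_abs, sq_abs, hV,
              ← Real.exp_nat_mul, norm_sub_rev x w]
            congr 3
            push_cast; ring
      _ = ENNReal.ofReal (C * b ^ (-(1 / 2) : ℝ)) * ∫⁻ x, ∫⁻ w,
            ENNReal.ofReal (Real.exp (-(2 * b) * ‖w - x‖ ^ 2)) * ‖H x‖ₑ ^ 2 := by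
          have hm : Measurable fun z : Euc n × Euc n =>
            ENNReal.ofReal (Real.exp (-(2 * b) * ‖z.1 - z.2‖ ^ 2)) * ‖H z.2‖ₑ ^ 2 := by fun_prop
          rw [lintegral_const_mul _ hm.lintegral_prod_right', lintegral_lintegral_swap hm.aemeasurable]
      _ = ENNReal.ofReal (C * b ^ (-(1 / 2) : ℝ)) * (ENNReal.ofReal ((π / (2 * b)) ^ ((n : ℝ) / 2)) *
            ∫⁻ x, ‖H x‖ₑ ^ 2) := by
          congr 1
          rw [← lintegral_const_mul _ (by fun_prop)]
          refine lintegral_congr fun x => ?_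
          rw [lintegral_mul_const _ (by fun_prop), gauss_lintegral (by positivity)]
      _ = _ := by
          rw [← mul_assoc, ← ENNReal.ofReal_mul (by positivity),
            mul_right_comm (ENNReal.ofReal (2 ^ ((n : ℝ) / 2) * C * b ^ (-(1 / 2) : ℝ))),
            ← ENNReal.ofReal_mul (by positivity)]
          congr 2
          rw [hD, show π / (2 * b) = 2 * (π / (4 * b)) by field_simp; norm_num,
            Real.mul_rpow (by norm_num) (by positivity)]
          ring
  exact (ENNReal.mul_le_mul_iff_left (by simpa using hD0) ENNReal.ofReal_ne_top).1 key


lemma sphCos_rem {n : ℕ} (hn : 2 ≤ n) [IsFiniteMeasure (sphMeasure n)] :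
    ∃ C, 0 ≤ C ∧ ∀ R : ℝ, 0 < R → ∀ x : Euc n,
      |sphCos n x * (1 - Real.exp (-(‖x‖ ^ 2 / R ^ 2))) ^ n| ≤ C * R ^ (-(((n : ℝ) - 1) / 2)) := by
  obtain ⟨C, hC0, hC⟩ := sphCos_decay hn
  refine ⟨Real.sqrt C, Real.sqrt_nonneg _, fun R hR x => ?_⟩
  apply abs_le_of_sq_le_sq _ (by positivity)
  set t := ‖x‖ / R with ht
  have ht0 : 0 ≤ t := by positivity
  have hs : ‖x‖ ^ 2 / R ^ 2 = t ^ 2 := by rw [ht, div_pow]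
  rw [hs]
  set v := 1 - Real.exp (-(t ^ 2)) with hv
  have hv0 : 0 ≤ v := by
    have : Real.exp (-(t ^ 2)) ≤ 1 := Real.exp_le_one_iff.2 (by nlinarith)
    linarith
  have hv1 : v ≤ 1 := by
    have := Real.exp_pos (-(t ^ 2)); linarith
  have hvt : v ≤ t ^ 2 := by
    have := Real.add_one_le_exp (-(t ^ 2)); linarith
  have hvn : (v ^ n) ^ 2 ≤ t ^ (n - 1) := by
    rcases le_total t 1 with h | h
    · have h1 : v ≤ t := hvt.trans (by nlinarith)
      calc (v ^ n) ^ 2 ≤ (t ^ n) ^ 2 := by gcongr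
        _ = t ^ (n * 2) := by rw [pow_mul]
        _ ≤ t ^ (n - 1) := pow_le_pow_of_le_one ht0 h (by omega)
    · calc (v ^ n) ^ 2 ≤ 1 := pow_le_one₀ (by positivity) (pow_le_one₀ hv0 hv1)
        _ ≤ _ := one_le_pow₀ h
  have hR2 : (R ^ (-(((n : ℝ) - 1) / 2))) ^ 2 = (R ^ (n - 1))⁻¹ := by
    rw [← Real.rpow_natCast, ← Real.rpow_mul hR.le, ← Real.rpow_natCast, ← Real.rpow_neg hR.le]
    congr 1
    rw [Nat.cast_sub (by omega)]
    push_cast; ring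
  rw [mul_pow, mul_pow, Real.sq_sqrt hC0, hR2]
  calc sphCos n x ^ 2 * (v ^ n) ^ 2 ≤ sphCos n x ^ 2 * t ^ (n - 1) := by gcongr
    _ = (‖x‖ ^ (n - 1) * sphCos n x ^ 2) * (R ^ (n - 1))⁻¹ := by
      rw [ht, div_pow]; ring
    _ ≤ _ := by gcongr; exact hC x

lemma ind_sq_lint {n : ℕ} {E : Set (Euc n)} (hE : MeasurableSet E) (hfin : volume E < ∞)
    {H : Euc n → ℂ} {A : ℝ} (hA0 : 0 ≤ A) (hA : ∀ x, ‖H x‖ ≤ E.indicator (fun _ => A) x) :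
    ∫⁻ x, ‖H x‖ₑ ^ 2 ≤ ENNReal.ofReal (A ^ 2 * (volume E).toReal) := by
  calc ∫⁻ x, ‖H x‖ₑ ^ 2 ≤ ∫⁻ x, E.indicator (fun _ => ENNReal.ofReal (A ^ 2)) x := by
        refine lintegral_mono fun x => ?_
        simp only
        have h1 := hA x
        by_cases hx : x ∈ E
        · rw [Set.indicator_of_mem hx] at h1 ⊢
          rw [enorm_sq_eq]
          exact ENNReal.ofReal_le_ofReal (pow_le_pow_left₀ (norm_nonneg _) h1 2)
        · rw [Set.indicator_of_notMem hx] at h1 ⊢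
          have : H x = 0 := norm_le_zero_iff.1 h1
          simp [this]
    _ = _ := by
        rw [lintegral_indicator_const hE, ENNReal.ofReal_mul (by positivity),
          ENNReal.ofReal_toReal hfin.ne]

lemma ind_int {n : ℕ} {E : Set (Euc n)} (hE : MeasurableSet E) (hfin : volume E < ∞)
    {H : Euc n → ℂ} (hH : Measurable H) {A : ℝ} (hA : ∀ x, ‖H x‖ ≤ E.indicator (fun _ => A) x) :
    ∫ x, ‖H x‖ ≤ A * (volume E).toReal := by
  calc ∫ x, ‖H x‖ ≤ ∫ x, E.indicator (fun _ => A) x := by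
        refine integral_mono (integrable_of_le_ind hE hfin hH hA).norm ?_ hA
        exact (integrable_indicator_iff hE).2 (integrableOn_const hfin.ne)
    _ = _ := by
        rw [integral_indicator_const _ hE, smul_eq_mul, mul_comm]; rfl

lemma binom_split (n : ℕ) (u : ℝ) :
    1 = (1 - u) ^ n - ∑ j ∈ Finset.range n, ((-1) ^ (j + 1) * (n.choose (j + 1) : ℝ)) * u ^ (j + 1) := by
  have h := add_pow (-u) 1 n
  rw [Finset.sum_range_succ'] at h
  simp only [one_pow, mul_one, pow_zero, Nat.choose_zero_right, Nat.cast_one] at h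
  rw [show (1 - u) = -u + 1 by ring, h, add_comm, add_sub_assoc, ← Finset.sum_sub_distrib,
    Finset.sum_eq_zero, add_zero]
  intro j _
  rw [neg_pow u]; ring

lemma st_R {n : ℕ} (hn : 2 ≤ n) [IsFiniteMeasure (sphMeasure n)] :
    ∃ C, 0 ≤ C ∧ ∀ R : ℝ, 0 < R → ∀ E : Set (Euc n), MeasurableSet E → volume E < ∞ →
      ∀ A : ℝ, 0 ≤ A → ∀ H : Euc n → ℂ, Measurable H →
      (∀ x, ‖H x‖ ≤ E.indicator (fun _ => A) x) →
      ∫⁻ ξ, ‖ftr volume H ξ‖ₑ ^ 2 ∂(sphMeasure n) ≤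
        ENNReal.ofReal (C * A ^ 2 * (R * (volume E).toReal +
          R ^ (-(((n : ℝ) - 1) / 2)) * (volume E).toReal ^ 2)) := by
  obtain ⟨C₁, hC₁0, hC₁⟩ := gauss_piece hn
  obtain ⟨C₂, hC₂0, hC₂⟩ := sphCos_rem hn
  set c : ℕ → ℝ := fun j => (-1) ^ (j + 1) * (n.choose (j + 1) : ℝ) with hc
  set S := ∑ j ∈ Finset.range n, |c j| with hS
  have hS0 : 0 ≤ S := Finset.sum_nonneg fun _ _ => abs_nonneg _
  refine ⟨S * C₁ + C₂, by positivity, fun R hR E hE hfin A hA0 H hHm hHE => ?_⟩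
  have hH : Integrable H := integrable_of_le_ind hE hfin hHm hHE
  have hcos : Continuous (sphCos n) := sphCos_cont
  set m := (volume E).toReal with hm
  have hm0 : 0 ≤ m := ENNReal.toReal_nonneg
  have hti := tens_integrable hH
  rw [ftr_sq_eq hH]
  set rem : Euc n × Euc n → ℝ := fun z =>
    sphCos n (z.1 - z.2) * (1 - Real.exp (-(‖z.1 - z.2‖ ^ 2 / R ^ 2))) ^ n with hrem
  set gp : ℕ → Euc n × Euc n → ℝ := fun j z =>
    sphCos n (z.1 - z.2) * Real.exp (-(((j : ℝ) + 1) / R ^ 2) * ‖z.1 - z.2‖ ^ 2) with hgp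
  have hremc : Continuous rem := by simp only [hrem]; fun_prop
  have hgpc : ∀ j, Continuous (gp j) := fun j => by simp only [hgp]; fun_prop
  have hremi : Integrable (fun z => tens H z * (rem z : ℂ)) (volume.prod volume) := by
    refine hti.mul_bdd (c := C₂ * R ^ (-(((n : ℝ) - 1) / 2))) ?_ ?_
    · exact (Complex.continuous_ofReal.comp hremc).aestronglyMeasurable
    · refine Filter.Eventually.of_forall fun z => ?_
      rw [Complex.norm_real, Real.norm_eq_abs]
      exact hC₂ R hR _
  have hgpi : ∀ j, Integrable (fun z => tens H z * (gp j z : ℂ)) (volume.prod volume) := by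
    intro j
    refine hti.mul_bdd (c := (sphMeasure n).real Set.univ) ?_ ?_
    · exact (Complex.continuous_ofReal.comp (hgpc j)).aestronglyMeasurable
    · refine Filter.Eventually.of_forall fun z => ?_
      rw [Complex.norm_real, Real.norm_eq_abs, hgp, abs_mul, Real.abs_exp]
      have h1 := sphCos_abs_le (z.1 - z.2)
      have h2 : Real.exp (-(((j : ℝ) + 1) / R ^ 2) * ‖z.1 - z.2‖ ^ 2) ≤ 1 := by
        apply Real.exp_le_one_iff.2
        have : 0 ≤ (((j : ℝ) + 1) / R ^ 2) * ‖z.1 - z.2‖ ^ 2 := by positivity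
        linarith
      calc _ ≤ (sphMeasure n).real Set.univ * 1 := by gcongr
        _ = _ := mul_one _
  have hsplit : ∀ z : Euc n × Euc n, sphCos n (z.1 - z.2) =
      rem z - ∑ j ∈ Finset.range n, c j * gp j z := by
    intro z
    have h := binom_split n (Real.exp (-(‖z.1 - z.2‖ ^ 2 / R ^ 2)))
    have h3 : ∀ j : ℕ, gp j z = sphCos n (z.1 - z.2) *
        Real.exp (-(‖z.1 - z.2‖ ^ 2 / R ^ 2)) ^ (j + 1) := fun j => by
      simp only [hgp]
      rw [← Real.exp_nat_mul]
      congr 2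
      push_cast; ring
    simp_rw [h3, hrem]
    calc sphCos n (z.1 - z.2) = sphCos n (z.1 - z.2) * 1 := (mul_one _).symm
      _ = _ := by
        rw [h, mul_sub, Finset.mul_sum]
        congr 1
        · rw [← h]
        · refine Finset.sum_congr rfl fun j _ => ?_
          simp only [hc]; ring
  have hSplitInt : ∫ z, tens H z * (sphCos n (z.1 - z.2) : ℂ) ∂(volume.prod volume) =
      ∫ z, tens H z * (rem z : ℂ) ∂(volume.prod volume) -
        ∑ j ∈ Finset.range n, (c j : ℂ) * ∫ z, tens H z * (gp j z : ℂ) ∂(volume.prod volume) := by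
    simp_rw [← integral_const_mul]
    rw [← integral_finsetSum _ (fun j _ => (hgpi j).const_mul _), ← integral_sub hremi
      (integrable_finsetSum _ (fun j _ => (hgpi j).const_mul _))]
    refine integral_congr_ae (Filter.Eventually.of_forall fun z => ?_)
    simp only
    rw [hsplit z]
    push_cast
    rw [mul_sub, Finset.mul_sum]
    congr 1
    refine Finset.sum_congr rfl fun j _ => ?_
    ring
  have b1 : ‖∫ z, tens H z * (rem z : ℂ) ∂(volume.prod volume)‖ ≤
      C₂ * R ^ (-(((n : ℝ) - 1) / 2)) * (A * m) ^ 2 := by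
    calc _ ≤ ∫ z, ‖tens H z‖ * (C₂ * R ^ (-(((n : ℝ) - 1) / 2))) ∂(volume.prod volume) := by
          refine norm_integral_le_of_norm_le (hti.norm.mul_const _)
            (Filter.Eventually.of_forall fun z => ?_)
          rw [norm_mul, Complex.norm_real, Real.norm_eq_abs]
          gcongr
          exact hC₂ R hR _
      _ = C₂ * R ^ (-(((n : ℝ) - 1) / 2)) * (∫ x, ‖H x‖) ^ 2 := by
          rw [integral_mul_const, mul_comm]
          congr 1
          simp_rw [tens_norm]
          rw [integral_prod_mul (fun x => ‖H x‖) (fun x => ‖H x‖), sq]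
      _ ≤ _ := by
          gcongr
          exact ind_int hE hfin hHm hHE
  have b2 : ∀ j, ‖∫ z, tens H z * (gp j z : ℂ) ∂(volume.prod volume)‖ ≤ C₁ * R * (A ^ 2 * m) := by
    intro j
    have hb : 0 < ((j : ℝ) + 1) / R ^ 2 := by positivity
    have h := (hC₁ (((j : ℝ) + 1) / R ^ 2) hb H hHm hH).trans
      (mul_le_mul_right (ind_sq_lint hE hfin hA0 hHE) _)
    rw [← ofReal_norm, ← ENNReal.ofReal_mul (by positivity),
      ENNReal.ofReal_le_ofReal_iff (by positivity)] at h
    refine h.trans ?_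
    gcongr
    calc (((j : ℝ) + 1) / R ^ 2) ^ (-(1 / 2) : ℝ) ≤ (1 / R ^ 2) ^ (-(1 / 2) : ℝ) := by
          apply Real.rpow_le_rpow_of_nonpos (by positivity) _ (by norm_num)
          gcongr
          have : (0 : ℝ) ≤ j := Nat.cast_nonneg j
          linarith
      _ = R := by
          rw [one_div, Real.inv_rpow (by positivity), Real.rpow_neg (by positivity), inv_inv,
            ← Real.sqrt_eq_rpow, Real.sqrt_sq hR.le]
  rw [← ofReal_norm]
  apply ENNReal.ofReal_le_ofReal
  rw [hSplitInt]
  calc _ ≤ ‖∫ z, tens H z * (rem z : ℂ) ∂(volume.prod volume)‖ +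
        ∑ j ∈ Finset.range n, ‖(c j : ℂ) * ∫ z, tens H z * (gp j z : ℂ) ∂(volume.prod volume)‖ := by
        refine (norm_sub_le _ _).trans ?_
        gcongr
        exact norm_sum_le _ _
    _ ≤ C₂ * R ^ (-(((n : ℝ) - 1) / 2)) * (A * m) ^ 2 +
        ∑ j ∈ Finset.range n, |c j| * (C₁ * R * (A ^ 2 * m)) := by
        gcongr with j hj
        rw [norm_mul, Complex.norm_real, Real.norm_eq_abs]
        gcongr
        exact b2 j
    _ = C₂ * (A ^ 2 * (R ^ (-(((n : ℝ) - 1) / 2)) * m ^ 2)) + S * C₁ * (A ^ 2 * (R * m)) := by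
        rw [← Finset.sum_mul, ← hS]; ring
    _ ≤ (S * C₁ + C₂) * (A ^ 2 * (R ^ (-(((n : ℝ) - 1) / 2)) * m ^ 2)) +
        (S * C₁ + C₂) * (A ^ 2 * (R * m)) := by
        have : 0 ≤ S * C₁ := by positivity
        gcongr <;> linarith
    _ = _ := by ring

lemma stein_tomas {n : ℕ} (hn : 2 ≤ n) [IsFiniteMeasure (sphMeasure n)] :
    ∃ C, 0 ≤ C ∧ ∀ E : Set (Euc n), MeasurableSet E → volume E < ∞ →
      ∀ A : ℝ, 0 ≤ A → ∀ H : Euc n → ℂ, Measurable H →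
      (∀ x, ‖H x‖ ≤ E.indicator (fun _ => A) x) →
      ∫⁻ ξ, ‖ftr volume H ξ‖ₑ ^ 2 ∂(sphMeasure n) ≤
        ENNReal.ofReal (C * A ^ 2 * (volume E).toReal ^ (1 + 2 / ((n : ℝ) + 1))) := by
  obtain ⟨C, hC0, hC⟩ := st_R hn
  refine ⟨2 * C, by positivity, fun E hE hfin A hA0 H hHm hHE => ?_⟩
  have hn1 : (0 : ℝ) < (n : ℝ) + 1 := by positivity
  rcases (ENNReal.toReal_nonneg (a := volume E)).eq_or_lt with h0 | hpos
  · refine (hC 1 one_pos E hE hfin A hA0 H hHm hHE).trans ?_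
    rw [← h0, Real.zero_rpow (by positivity)]
    simp
  · refine (hC ((volume E).toReal ^ (2 / ((n : ℝ) + 1))) (by positivity) E hE hfin A hA0 H hHm hHE).trans ?_
    apply ENNReal.ofReal_le_ofReal
    set m := (volume E).toReal with hm
    have e1 : m ^ (2 / ((n : ℝ) + 1)) * m = m ^ (1 + 2 / ((n : ℝ) + 1)) := by
      rw [add_comm (1 : ℝ), Real.rpow_add_one hpos.ne']
    have e2 : (m ^ (2 / ((n : ℝ) + 1))) ^ (-(((n : ℝ) - 1) / 2)) * m ^ 2 = m ^ (1 + 2 / ((n : ℝ) + 1)) := by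
      rw [← Real.rpow_mul hpos.le, ← Real.rpow_natCast, ← Real.rpow_add hpos]
      congr 1
      push_cast
      field_simp
      ring
    rw [e1, e2]
    apply le_of_eq; ring


/-! ### The key restricted estimate -/

lemma cs_F {n : ℕ} [IsFiniteMeasure (sphMeasure n)] (F : Set (Euc n))
    (f : Euc n → ℝ≥0∞) (hf : Measurable f) {a : ℝ}
    (h : ∫⁻ ξ, f ξ ^ 2 ∂(sphMeasure n) ≤ ENNReal.ofReal a) :
    ∫⁻ ξ in F, f ξ ∂(sphMeasure n) ≤ ENNReal.ofReal (Real.sqrt ((sphMeasure n F).toReal * a)) := by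
  have h1 := lint_CS ((sphMeasure n).restrict F) (fun _ => 1) f aemeasurable_const hf.aemeasurable
  simp only [one_mul, one_pow, lintegral_one, Measure.restrict_apply_univ] at h1
  have h2 : (∫⁻ ξ in F, f ξ ∂(sphMeasure n)) ^ 2 ≤
      ENNReal.ofReal (Real.sqrt ((sphMeasure n F).toReal * a)) ^ 2 := by
    rcases le_total 0 a with ha | ha
    · rw [← ENNReal.ofReal_pow (Real.sqrt_nonneg _), Real.sq_sqrt (by positivity),
        ENNReal.ofReal_mul ENNReal.toReal_nonneg, ENNReal.ofReal_toReal (measure_ne_top _ _)]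
      refine h1.trans ?_
      gcongr
      exact (setLIntegral_le_lintegral _ _).trans h
    · have h0 : ∫⁻ ξ in F, f ξ ^ 2 ∂(sphMeasure n) = 0 := by
        rw [ENNReal.ofReal_of_nonpos ha] at h
        exact le_antisymm ((setLIntegral_le_lintegral _ _).trans h) bot_le
      rw [h0, mul_zero] at h1
      exact h1.trans bot_le
  exact (ENNReal.pow_le_pow_left_iff two_ne_zero).1 h2

lemma jb_ge_one {n : ℕ} (x : Euc n) : 1 ≤ jb x := by
  unfold jb
  exact Real.one_le_sqrt.2 (by nlinarith [sq_nonneg ‖x‖])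

lemma ind_one {n : ℕ} {γ : ℝ} (hγ : 0 < γ) {E : Set (Euc n)} {H : Euc n → ℂ}
    (hH : ∀ x, ‖H x‖ ≤ E.indicator (fun x => jb x ^ (-γ)) x) (x : Euc n) :
    ‖H x‖ ≤ E.indicator (fun _ => (1 : ℝ)) x := by
  refine (hH x).trans (Set.indicator_le_indicator' fun _ => ?_)
  exact Real.rpow_le_one_of_one_le_of_nonpos (jb_ge_one x) (by linarith)

/-- The restricted dual estimate. -/
def KeyEst (n : ℕ) (γ s t : ℝ) : Prop :=
  ∃ C, 0 ≤ C ∧ ∀ F : Set (Euc n), MeasurableSet F → ∀ E : Set (Euc n), MeasurableSet E →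
    volume E < ∞ → ∀ H : Euc n → ℂ, Measurable H →
    (∀ x, ‖H x‖ ≤ E.indicator (fun x => jb x ^ (-γ)) x) →
    ∫⁻ ξ in F, ‖ftr volume H ξ‖ₑ ∂(sphMeasure n) ≤
      ENNReal.ofReal (C * (sphMeasure n F).toReal ^ s * (volume E).toReal ^ t)

/-- inner part -/
def inn {n : ℕ} (R : ℝ) (H : Euc n → ℂ) : Euc n → ℂ := {x | jb x ≤ R}.indicator H

/-- outer part -/
def out {n : ℕ} (R : ℝ) (H : Euc n → ℂ) : Euc n → ℂ := {x | jb x ≤ R}ᶜ.indicator H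

lemma jb_set_meas {n : ℕ} (R : ℝ) : MeasurableSet {x : Euc n | jb x ≤ R} :=
  measurableSet_le jb_cont.measurable measurable_const

lemma out_le {n : ℕ} {γ : ℝ} (hγ : 0 < γ) {R : ℝ} (hR : 0 < R) {E : Set (Euc n)} {H : Euc n → ℂ}
    (hH : ∀ x, ‖H x‖ ≤ E.indicator (fun x => jb x ^ (-γ)) x) (x : Euc n) :
    ‖out R H x‖ ≤ E.indicator (fun _ => R ^ (-γ)) x := by
  unfold out
  by_cases hx : x ∈ {x : Euc n | jb x ≤ R}ᶜ
  · rw [Set.indicator_of_mem hx]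
    refine (hH x).trans (Set.indicator_le_indicator' fun _ => ?_)
    have hx2 : ¬ jb x ≤ R := hx
    exact Real.rpow_le_rpow_of_nonpos hR (not_le.1 hx2).le (by linarith)
  · rw [Set.indicator_of_notMem hx, norm_zero]
    exact Set.indicator_nonneg (fun _ _ => by positivity) _

lemma inn_le {n : ℕ} {γ : ℝ} {R : ℝ} {E : Set (Euc n)} {H : Euc n → ℂ}
    (hH : ∀ x, ‖H x‖ ≤ E.indicator (fun x => jb x ^ (-γ)) x) (x : Euc n) :
    ‖inn R H x‖ ≤ E.indicator (fun x => jb x ^ (-γ)) x :=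
  (norm_indicator_le_norm_self _ _).trans (hH x)

lemma split_F {n : ℕ} [IsFiniteMeasure (sphMeasure n)] (R : ℝ) (F : Set (Euc n)) {H : Euc n → ℂ}
    (hI : Integrable H) :
    ∫⁻ ξ in F, ‖ftr volume H ξ‖ₑ ∂(sphMeasure n) ≤
      ∫⁻ ξ in F, ‖ftr volume (inn R H) ξ‖ₑ ∂(sphMeasure n) +
      ∫⁻ ξ in F, ‖ftr volume (out R H) ξ‖ₑ ∂(sphMeasure n) := by
  have h1 : Integrable (inn R H) := hI.indicator (jb_set_meas R)
  have h2 : Integrable (out R H) := hI.indicator (jb_set_meas R).compl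
  rw [← lintegral_add_left (ftr_continuous _ h1).measurable.enorm]
  refine lintegral_mono fun ξ => ?_
  have e : ftr volume H ξ = ftr volume (inn R H) ξ + ftr volume (out R H) ξ := by
    have hb : ∀ {G : Euc n → ℂ}, Integrable G →
        Integrable fun x => Complex.exp (Complex.I * (⟪ξ, x⟫ : ℝ)) * G x := fun {G} hG => by
      refine hG.bdd_mul (c := 1) (Continuous.aestronglyMeasurable (by fun_prop)) ?_
      exact Filter.Eventually.of_forall fun x => by rw [phase_norm]
    simp only [ftr]
    rw [← integral_add (hb h1) (hb h2)]
    refine integral_congr_ae (Filter.Eventually.of_forall fun x => ?_)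
    simp only
    rw [← mul_add]
    congr 1
    exact (Set.indicator_self_add_compl_apply _ _ _).symm
  rw [e]
  exact enorm_add_le _ _

lemma key_zero {n : ℕ} {γ : ℝ} (hγ : 0 < γ) {E : Set (Euc n)} (hE : MeasurableSet E)
    (h0 : (volume E).toReal = 0) (hfin : volume E < ∞) {H : Euc n → ℂ} (hHm : Measurable H)
    (hH : ∀ x, ‖H x‖ ≤ E.indicator (fun x => jb x ^ (-γ)) x) (ξ : Euc n) :
    ftr volume H ξ = 0 := by
  have h1 := ind_int hE hfin hHm (ind_one hγ hH)
  rw [h0, mul_zero] at h1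
  exact norm_le_zero_iff.1 ((ftr_norm_le _ _ _).trans h1)

lemma key_AB {n : ℕ} (hn : 2 ≤ n) [IsFiniteMeasure (sphMeasure n)] {γ : ℝ} (hγ : 0 < γ)
    (hγ2 : γ < 1 / 2) : KeyEst n γ (1 / 2) (1 / 2 + (1 - 2 * γ) / ((n : ℝ) + 1)) := by
  obtain ⟨C₁, hC₁0, hC₁⟩ := dual_weighted hn hγ hγ2
  obtain ⟨C₂, hC₂0, hC₂⟩ := stein_tomas hn
  have hn1 : (0 : ℝ) < (n : ℝ) + 1 := by positivity
  refine ⟨Real.sqrt C₁ + Real.sqrt C₂, by positivity, fun F hF E hE hfin H hHm hH => ?_⟩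
  rcases (ENNReal.toReal_nonneg (a := volume E)).eq_or_lt with h0 | hpos
  · simp [key_zero hγ hE h0.symm hfin hHm hH]
  set m := (volume E).toReal with hm
  set f := (sphMeasure n F).toReal with hf
  have hf0 : 0 ≤ f := ENNReal.toReal_nonneg
  set R := m ^ (2 / ((n : ℝ) + 1)) with hR
  have hR0 : 0 < R := by positivity
  have hI : Integrable H := integrable_of_le_ind hE hfin hHm (ind_one hγ hH)
  have h1 : Integrable (inn R H) := hI.indicator (jb_set_meas R)
  have h2 : Integrable (out R H) := hI.indicator (jb_set_meas R).compl
  have i1 := hC₁ R hR0 E hE hfin (inn R H) (hHm.indicator (jb_set_meas R)) (inn_le hH)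
    (fun x hx => Set.indicator_of_notMem (by simpa using hx) _)
  have i2 := hC₂ E hE hfin (R ^ (-γ)) (by positivity) (out R H) (hHm.indicator (jb_set_meas R).compl)
    (out_le hγ hR0 hH)
  rw [← ENNReal.ofReal_toReal hfin.ne, ← ENNReal.ofReal_mul (by positivity), ← hm] at i1
  have j1 := cs_F F _ (ftr_continuous _ h1).measurable.enorm i1
  have j2 := cs_F F _ (ftr_continuous _ h2).measurable.enorm i2
  refine (split_F R F hI).trans ((add_le_add j1 j2).trans ?_)
  rw [← ENNReal.ofReal_add (by positivity) (by positivity)]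
  apply ENNReal.ofReal_le_ofReal
  apply le_of_eq
  set t := 1 / 2 + (1 - 2 * γ) / ((n : ℝ) + 1) with ht
  have e1 : R ^ (1 - 2 * γ) * m = m ^ (t * 2) := by
    rw [hR, ← Real.rpow_mul hpos.le, ← Real.rpow_add_one hpos.ne']
    congr 1
    rw [ht]; field_simp; ring
  have e2 : (R ^ (-γ)) ^ 2 * m ^ (1 + 2 / ((n : ℝ) + 1)) = m ^ (t * 2) := by
    rw [← Real.rpow_natCast, hR, ← Real.rpow_mul hpos.le, ← Real.rpow_mul hpos.le, ← Real.rpow_add hpos]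
    congr 1
    rw [ht]; push_cast; field_simp; ring
  have e3 : Real.sqrt (m ^ (t * 2)) = m ^ t := by
    rw [Real.rpow_mul hpos.le, Real.rpow_two, Real.sqrt_sq (by positivity)]
  rw [mul_assoc C₁, mul_assoc C₂, e1, e2, ← hf, Real.sqrt_mul hf0, Real.sqrt_mul hf0, Real.sqrt_mul hC₁0,
    Real.sqrt_mul hC₂0, e3, Real.sqrt_eq_rpow f]
  ring

lemma key_AD {n : ℕ} (hn : 2 ≤ n) [IsFiniteMeasure (sphMeasure n)] {γ : ℝ} (hγ : 0 < γ)
    (hγ2 : γ < 1 / 2) : KeyEst n γ (1 - γ) (1 - γ) := by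
  obtain ⟨C₁, hC₁0, hC₁⟩ := dual_weighted hn hγ hγ2
  refine ⟨Real.sqrt C₁ + 1, by positivity, fun F hF E hE hfin H hHm hH => ?_⟩
  rcases (ENNReal.toReal_nonneg (a := volume E)).eq_or_lt with h0 | hpos
  · simp [key_zero hγ hE h0.symm hfin hHm hH]
  rcases (ENNReal.toReal_nonneg (a := sphMeasure n F)).eq_or_lt with h0 | hfpos
  · have : sphMeasure n F = 0 :=
      ((ENNReal.toReal_eq_zero_iff _).1 h0.symm).resolve_right (measure_ne_top _ _)
    rw [Measure.restrict_eq_zero.2 this]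
    simp
  set m := (volume E).toReal with hm
  set f := (sphMeasure n F).toReal with hf
  set R := f * m with hR
  have hR0 : 0 < R := by positivity
  have hI : Integrable H := integrable_of_le_ind hE hfin hHm (ind_one hγ hH)
  have h1 : Integrable (inn R H) := hI.indicator (jb_set_meas R)
  have i1 := hC₁ R hR0 E hE hfin (inn R H) (hHm.indicator (jb_set_meas R)) (inn_le hH)
    (fun x hx => Set.indicator_of_notMem (by simpa using hx) _)
  rw [← ENNReal.ofReal_toReal hfin.ne, ← ENNReal.ofReal_mul (by positivity), ← hm] at i1
  have j1 := cs_F F _ (ftr_continuous _ h1).measurable.enorm i1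
  have j2 : ∫⁻ ξ in F, ‖ftr volume (out R H) ξ‖ₑ ∂(sphMeasure n) ≤
      ENNReal.ofReal (R ^ (-γ) * m * f) := by
    calc _ ≤ ∫⁻ ξ in F, ENNReal.ofReal (R ^ (-γ) * m) ∂(sphMeasure n) := by
          refine lintegral_mono fun ξ => ?_
          rw [← ofReal_norm]
          apply ENNReal.ofReal_le_ofReal
          exact (ftr_norm_le _ _ _).trans
            (ind_int hE hfin (hHm.indicator (jb_set_meas R).compl) (out_le hγ hR0 hH))
      _ = _ := by
          rw [setLIntegral_const, ENNReal.ofReal_mul (p := R ^ (-γ) * m) (by positivity), hf,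
            ENNReal.ofReal_toReal (measure_ne_top _ _)]
  refine (split_F R F hI).trans ((add_le_add j1 j2).trans ?_)
  rw [← ENNReal.ofReal_add (by positivity) (by positivity)]
  apply ENNReal.ofReal_le_ofReal
  apply le_of_eq
  have e1 : f * (C₁ * R ^ (1 - 2 * γ) * m) = C₁ * (R ^ (1 - γ)) ^ 2 := by
    rw [← Real.rpow_natCast, ← Real.rpow_mul hR0.le,
      show (1 - γ) * (2 : ℕ) = (1 - 2 * γ) + 1 by push_cast; ring, Real.rpow_add_one hR0.ne', hR]
    ring
  have e2 : R ^ (-γ) * m * f = R ^ (1 - γ) := by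
    rw [show 1 - γ = -γ + 1 by ring, Real.rpow_add_one hR0.ne', hR]
    ring
  rw [← hf, e1, e2, Real.sqrt_mul hC₁0, Real.sqrt_sq (by positivity), hR,
    Real.mul_rpow hfpos.le hpos.le]
  ring


/-! ### Assembly -/

lemma core {n : ℕ} [IsFiniteMeasure (sphMeasure n)] {γ s t C : ℝ} (hC0 : 0 ≤ C) (hs : 0 ≤ s)
    (hkey : ∀ F : Set (Euc n), MeasurableSet F → ∀ E : Set (Euc n), MeasurableSet E →
      volume E < ∞ → ∀ H : Euc n → ℂ, Measurable H →
      (∀ x, ‖H x‖ ≤ E.indicator (fun x => jb x ^ (-γ)) x) →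
      ∫⁻ ξ in F, ‖ftr volume H ξ‖ₑ ∂(sphMeasure n) ≤
        ENNReal.ofReal (C * (sphMeasure n F).toReal ^ s * (volume E).toReal ^ t))
    (hγ : 0 < γ) {g : Euc n → ℂ} (hgm : Measurable g) (hg : Integrable g (sphMeasure n)) {l : ℝ}
    {E : Set (Euc n)} (hE : MeasurableSet E) (hfin : volume E < ∞)
    (hEl : ∀ x ∈ E, l < ‖extOp n g x‖ * jb x ^ (-γ)) :
    ENNReal.ofReal l * volume E ≤ ENNReal.ofReal (C * (volume E).toReal ^ t) *
      ∫⁻ τ in Set.Ioi (0 : ℝ), sphMeasure n {ξ | τ < ‖g ξ‖} ^ s := by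
  set T := extOp n g with hT
  have hTc : Continuous T := ftr_continuous _ hg
  have hTm := hTc.measurable
  have hjm : Measurable (fun x : Euc n => jb x ^ (-γ)) := jb_rpow_meas _
  have hcm : Measurable (starRingEnd ℂ) := Complex.continuous_conj.measurable
  set H : Euc n → ℂ := E.indicator fun x =>
    (starRingEnd ℂ) (T x) / (‖T x‖ : ℂ) * ((jb x ^ (-γ) : ℝ) : ℂ) with hH
  have hHm : Measurable H := Measurable.indicator (by fun_prop) hE
  have hHE : ∀ x, ‖H x‖ ≤ E.indicator (fun x => jb x ^ (-γ)) x := by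
    intro x
    have hj := jb_pos x
    by_cases hx : x ∈ E
    · rw [hH, Set.indicator_of_mem hx, Set.indicator_of_mem hx, norm_mul, norm_div, RCLike.norm_conj,
        Complex.norm_real, Complex.norm_real, norm_norm, Real.norm_eq_abs, abs_of_pos (by positivity)]
      have : ‖T x‖ / ‖T x‖ ≤ 1 := div_self_le_one _
      calc _ ≤ 1 * jb x ^ (-γ) := by gcongr
        _ = _ := one_mul _
    · rw [hH, Set.indicator_of_notMem hx, Set.indicator_of_notMem hx, norm_zero]
  have hHi : Integrable H := integrable_of_le_ind hE hfin hHm (ind_one hγ hHE)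
  set P := ftr volume H with hP
  have hPm : Measurable P := (ftr_continuous _ hHi).measurable
  set r : Euc n → ℝ := E.indicator fun x => ‖T x‖ * jb x ^ (-γ) with hr
  have hTH : ∀ x, T x * H x = ((r x : ℝ) : ℂ) := by
    intro x
    by_cases hx : x ∈ E
    · rw [hH, hr, Set.indicator_of_mem hx, Set.indicator_of_mem hx, ← mul_assoc, ← mul_div_assoc,
        Complex.mul_conj, Complex.normSq_eq_norm_sq, Complex.ofReal_mul, ← Complex.ofReal_div, sq,
        mul_self_div_self]
    · rw [hH, hr, Set.indicator_of_notMem hx, Set.indicator_of_notMem hx]; simp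
  have hr0 : ∀ x, 0 ≤ r x := fun x => Set.indicator_nonneg (fun y _ => by
    have := jb_pos y; positivity) x
  have hri : Integrable r := by
    have h1 : Integrable (fun x => T x * H x) := by
      refine hHi.bdd_mul (c := ∫ ξ, ‖g ξ‖ ∂(sphMeasure n)) hTm.aestronglyMeasurable ?_
      exact Filter.Eventually.of_forall fun x => ftr_norm_le _ _ _
    refine h1.norm.congr (Filter.Eventually.of_forall fun x => ?_)
    simp only
    rw [hTH, Complex.norm_real, Real.norm_eq_abs, abs_of_nonneg (hr0 x)]
  have hpair : ∫ x, T x * H x = ∫ ξ, g ξ * P ξ ∂(sphMeasure n) :=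
    ftr_pairing (sphMeasure n) volume hg hHi
  have a1 : ENNReal.ofReal l * volume E ≤ ‖∫ x, T x * H x‖ₑ := by
    simp_rw [hTH]
    rw [integral_complex_ofReal, ← ofReal_norm, Complex.norm_real, Real.norm_eq_abs,
      abs_of_nonneg (integral_nonneg hr0),
      ofReal_integral_eq_lintegral_ofReal hri (Filter.Eventually.of_forall hr0),
      ← lintegral_indicator_const hE]
    refine lintegral_mono fun x => ?_
    by_cases hx : x ∈ E
    · simp only [hr]
      rw [Set.indicator_of_mem hx, Set.indicator_of_mem hx]
      exact ENNReal.ofReal_le_ofReal (hEl x hx).le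
    · simp only
      rw [Set.indicator_of_notMem hx]; exact bot_le
  have a2 : ‖∫ ξ, g ξ * P ξ ∂(sphMeasure n)‖ₑ ≤
      ∫⁻ τ in Set.Ioi (0 : ℝ), ∫⁻ ξ in {ξ | τ < ‖g ξ‖}, ‖P ξ‖ₑ ∂(sphMeasure n) := by
    refine (enorm_integral_le_lintegral_enorm _).trans (le_of_eq ?_)
    have hlc := lintegral_eq_lintegral_meas_lt ((sphMeasure n).withDensity fun ξ => ‖P ξ‖ₑ)
      (f := fun ξ => ‖g ξ‖) (Filter.Eventually.of_forall fun ξ => norm_nonneg _)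
      hgm.norm.aemeasurable
    rw [lintegral_withDensity_eq_lintegral_mul _ hPm.enorm (by fun_prop)] at hlc
    calc _ = ∫⁻ ξ, ((fun ξ => ‖P ξ‖ₑ) * fun ξ => ENNReal.ofReal ‖g ξ‖) ξ ∂(sphMeasure n) := by
          refine lintegral_congr fun ξ => ?_
          simp only [Pi.mul_apply]
          rw [enorm_mul, ofReal_norm, mul_comm]
      _ = _ := by
          rw [hlc]
          refine lintegral_congr fun τ => ?_
          rw [withDensity_apply _ (measurableSet_lt measurable_const hgm.norm)]
  refine a1.trans (hpair ▸ a2.trans ?_)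
  rw [← lintegral_const_mul' _ _ ENNReal.ofReal_ne_top]
  refine lintegral_mono fun τ => ?_
  refine (hkey _ (measurableSet_lt measurable_const hgm.norm) E hE hfin H hHm hHE).trans (le_of_eq ?_)
  rw [mul_right_comm, ENNReal.ofReal_mul (by positivity), ← ENNReal.ofReal_rpow_of_nonneg
    ENNReal.toReal_nonneg hs, ENNReal.ofReal_toReal (measure_ne_top _ _)]

lemma assembly {n : ℕ} [IsFiniteMeasure (sphMeasure n)] {γ p q : ℝ} (hγ : 0 < γ) (hp : 0 < p)
    (hq : 0 < q) (hq1 : 0 ≤ 1 - 1 / q) (hkey : KeyEst n γ (1 / p) (1 - 1 / q)) :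
    ∃ C : ℝ≥0, 0 < C ∧ ∀ g : Euc n → ℂ, Measurable g →
      wLorentzNorm volume q (fun x => extOp n g x * ((jb x ^ (-γ) : ℝ) : ℂ))
        ≤ C * lorentzNorm (sphMeasure n) p 1 g := by
  obtain ⟨C, hC0, hC⟩ := hkey
  refine ⟨Real.toNNReal (C / p) + 1, by positivity, fun g hgm => ?_⟩
  set I := ∫⁻ τ in Set.Ioi (0 : ℝ), sphMeasure n {ξ | τ < ‖g ξ‖} ^ (1 / p) with hI
  have hL : lorentzNorm (sphMeasure n) p 1 g = ENNReal.ofReal p * I := by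
    unfold lorentzNorm
    rw [div_one, ENNReal.rpow_one, hI]
    congr 1
    refine setLIntegral_congr_fun measurableSet_Ioi fun l hl => ?_
    have hl : 0 < l := hl
    rw [ENNReal.rpow_one, mul_comm]
    exact ENNReal.mul_div_cancel_right (by simpa using hl) ENNReal.ofReal_ne_top
  have hCL : ENNReal.ofReal C * I ≤ ((Real.toNNReal (C / p) + 1 : ℝ≥0) : ℝ≥0∞) *
      lorentzNorm (sphMeasure n) p 1 g := by
    rw [hL, ← mul_assoc]
    gcongr
    rw [ENNReal.coe_add, add_mul]
    refine le_trans (le_of_eq ?_) le_self_add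
    change _ = ENNReal.ofReal (C / p) * _
    rw [← ENNReal.ofReal_mul (by positivity), div_mul_cancel₀ _ hp.ne']
  refine le_trans ?_ hCL
  unfold wLorentzNorm
  refine iSup_le fun ⟨l, hl⟩ => ?_
  simp only
  have hnorm : ∀ x, ‖extOp n g x * ((jb x ^ (-γ) : ℝ) : ℂ)‖ = ‖extOp n g x‖ * jb x ^ (-γ) := fun x => by
    have := jb_pos x
    rw [norm_mul, Complex.norm_real, Real.norm_eq_abs, abs_of_pos (by positivity)]
  simp_rw [hnorm]
  have hq' : 0 < 1 / q := by positivity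
  by_cases hg : Integrable g (sphMeasure n)
  · have hTc : Continuous (extOp n g) := ftr_continuous _ hg
    set S := {x : Euc n | l < ‖extOp n g x‖ * jb x ^ (-γ)} with hS
    have hSm : MeasurableSet S := measurableSet_lt measurable_const (hTc.measurable.norm.mul (jb_rpow_meas _))
    set E : ℕ → Set (Euc n) := fun N => S ∩ Metric.ball 0 N with hEd
    have hmono : Monotone E := fun a b hab =>
      Set.inter_subset_inter_right _ (Metric.ball_subset_ball (by exact_mod_cast hab))
    have hU : ⋃ N, E N = S := by
      rw [hEd, ← Set.inter_iUnion, Metric.iUnion_ball_nat, Set.inter_univ]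
    have hlim := tendsto_measure_iUnion_atTop (μ := (volume : Measure (Euc n))) hmono
    rw [hU] at hlim
    have hlim2 := ENNReal.Tendsto.const_mul (a := ENNReal.ofReal l)
      ((ENNReal.continuous_rpow_const (y := 1 / q)).continuousAt.tendsto.comp hlim)
      (Or.inr ENNReal.ofReal_ne_top)
    refine le_of_tendsto' hlim2 fun N => ?_
    simp only [Function.comp]
    have hEm : MeasurableSet (E N) := hSm.inter Metric.isOpen_ball.measurableSet
    have hfin : volume (E N) < ∞ :=
      lt_of_le_of_lt (measure_mono Set.inter_subset_right) measure_ball_lt_top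
    have h := core hC0 (by positivity) hC hγ hgm hg hEm hfin (fun x hx => hx.1)
    rw [← hI] at h
    by_cases h0 : volume (E N) = 0
    · rw [h0, ENNReal.zero_rpow_of_pos hq', mul_zero]; exact bot_le
    · have e1 : ENNReal.ofReal (C * (volume (E N)).toReal ^ (1 - 1 / q)) =
          ENNReal.ofReal C * volume (E N) ^ (1 - 1 / q) := by
        rw [ENNReal.ofReal_mul hC0, ← ENNReal.ofReal_rpow_of_nonneg ENNReal.toReal_nonneg hq1,
          ENNReal.ofReal_toReal hfin.ne]
      have e2 : volume (E N) = volume (E N) ^ (1 / q) * volume (E N) ^ (1 - 1 / q) := by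
        rw [← ENNReal.rpow_add _ _ h0 hfin.ne]; simp
      rw [e1] at h
      nth_rewrite 1 [e2] at h
      rw [← mul_assoc, mul_right_comm (ENNReal.ofReal C)] at h
      refine (ENNReal.mul_le_mul_iff_left ?_ ?_).1 h
      · exact (ENNReal.rpow_pos (pos_iff_ne_zero.2 h0) hfin.ne).ne'
      · exact ENNReal.rpow_ne_top_of_nonneg hq1 hfin.ne
  · have hT0 : ∀ x, extOp n g x = 0 := by
      intro x
      refine integral_undef fun hi => hg ?_
      refine (integrable_norm_iff hgm.aestronglyMeasurable).1 ?_
      refine hi.norm.congr (Filter.Eventually.of_forall fun ξ => ?_)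
      simp only
      rw [norm_mul, phase_norm, one_mul]
    have : {x : Euc n | l < ‖extOp n g x‖ * jb x ^ (-γ)} = ∅ := by
      ext x
      simp [hT0, hl.le]
    rw [this, measure_empty, ENNReal.zero_rpow_of_pos hq', mul_zero]
    exact bot_le


/-- With `A = (1/2,1/2)`, `B = (1/2,(n-1)/(2(n+1)))`, `D = (1,0)`:
if `(1/p,1/q)` lies in the open segment `(A,B)` or `(A,D)` and
`γ = (n+1)/(2q) - (n-1)/(2p')`, then
`‖ ĝdσ ⟨·⟩^{-γ} ‖_{L^{q,∞}(ℝⁿ)} ≤ C ‖g‖_{L^{p,1}(𝕊^{n-1})}`. -/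
theorem restricted_weak_type_endpoint (n : ℕ) (hn : 2 ≤ n) (p q : ℝ)
    (hseg :
      (∃ θ : ℝ, 0 < θ ∧ θ < 1 ∧
        1 / p = θ * (1 / 2) + (1 - θ) * (1 / 2) ∧
        1 / q = θ * (1 / 2) + (1 - θ) * (((n : ℝ) - 1) / (2 * ((n : ℝ) + 1)))) ∨
      (∃ θ : ℝ, 0 < θ ∧ θ < 1 ∧
        1 / p = θ * (1 / 2) + (1 - θ) * 1 ∧
        1 / q = θ * (1 / 2) + (1 - θ) * 0)) :
    ∃ C : ℝ≥0, 0 < C ∧ ∀ g : Euc n → ℂ, Measurable g →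
      wLorentzNorm volume q
          (fun x => extOp n g x *
            ((Real.sqrt (1 + ‖x‖ ^ 2)
              ^ (-(((n : ℝ) + 1) / (2 * q) - ((n : ℝ) - 1) / 2 * (1 - 1 / p))) : ℝ) : ℂ))
        ≤ C * lorentzNorm (sphMeasure n) p 1 g := by
  haveI : IsFiniteMeasure (sphMeasure n) := ⟨sph_finite n hn⟩
  have hn' : (2 : ℝ) ≤ n := by exact_mod_cast hn
  have hn1 : (n : ℝ) + 1 ≠ 0 := by positivity
  rcases hseg with ⟨θ, h0, h1, hp, hq⟩ | ⟨θ, h0, h1, hp, hq⟩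
  · have hqe : 1 - 1 / q = 1 / 2 + (1 - 2 * (θ / 2)) / ((n : ℝ) + 1) := by
      rw [hq]; field_simp; ring
    have hpe : 1 / p = 1 / 2 := by rw [hp]; ring
    have hγ : ((n : ℝ) + 1) / (2 * q) - ((n : ℝ) - 1) / 2 * (1 - 1 / p) = θ / 2 := by
      have : ((n : ℝ) + 1) / (2 * q) = ((n : ℝ) + 1) / 2 * (1 / q) := by ring
      rw [this, hq, hpe]; field_simp; ring
    have hp0 : 0 < p := one_div_pos.1 (by rw [hpe]; norm_num)
    have hq0 : 0 < q := by
      refine one_div_pos.1 ?_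
      rw [hq]
      have : 0 ≤ (1 - θ) * (((n : ℝ) - 1) / (2 * ((n : ℝ) + 1))) :=
        mul_nonneg (by linarith) (div_nonneg (by linarith) (by linarith))
      linarith
    have hq1 : 0 ≤ 1 - 1 / q := by
      rw [hqe]
      have : 0 ≤ (1 - 2 * (θ / 2)) / ((n : ℝ) + 1) := div_nonneg (by linarith) (by linarith)
      linarith
    rw [hγ]
    refine assembly (by linarith) hp0 hq0 hq1 ?_
    rw [hqe, hpe]
    exact key_AB hn (by linarith) (by linarith)
  · have hqe : 1 / q = θ / 2 := by rw [hq]; ring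
    have hpe : 1 / p = 1 - θ / 2 := by rw [hp]; ring
    have hγ : ((n : ℝ) + 1) / (2 * q) - ((n : ℝ) - 1) / 2 * (1 - 1 / p) = θ / 2 := by
      have : ((n : ℝ) + 1) / (2 * q) = ((n : ℝ) + 1) / 2 * (1 / q) := by ring
      rw [this, hqe, hpe]; ring
    have hp0 : 0 < p := one_div_pos.1 (by rw [hpe]; linarith)
    have hq0 : 0 < q := one_div_pos.1 (by rw [hqe]; linarith)
    have hq1 : 0 ≤ 1 - 1 / q := by rw [hqe]; linarith
    rw [hγ]
    refine assembly (by linarith) hp0 hq0 hq1 ?_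
    rw [hqe, hpe]
    exact key_AD hn (by linarith) (by linarith)
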